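/- arXiv:2601.18333 — 4 statements merged into one kernel-verified Lean document; each statement's English description precedes it below -/
import Mathlib

section
/- Kruskal's uniqueness theorem for third-order canonical polyadic decomposition: Let A ∈ ℂ^{I₁×Q}, B ∈ ℂ^{I₂×Q}, C ∈ ℂ^{I₃×Q} be matrices whose k-ranks satisfy k_A + k_B + k_C ≥ 2Q + 2, and define the third-order tensor 𝒴(i,j,k) = ∑_{q=1}^{Q} A(i,q)·B(j,q)·C(k,q). Then for any matrices Ā ∈ ℂ^{I₁×Q}, B̄ ∈ ℂ^{I₂×Q}, C̄ ∈ ℂ^{I₃×Q} satisfying ∑_{q=1}^{Q} Ā(i,q)·B̄(j,q)·C̄(k,q) = 𝒴(i,j,k) for all (i,j,k), there exist a permutation σ of {1,…,Q} and nonzero complex scalars λ_q, μ_q, ν_q with λ_q·μ_q·ν_q = 1 for every q, such that for all q and all row indices: Ā(·,q) = λ_q·A(·,σ(q)), B̄(·,q) = μ_q·B(·,σ(q)), and C̄(·,q) = ν_q·C(·,σ(q)). -/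
/-!
The proof follows Kruskal. Contracting the tensor by a functional `h` on the third factor gives two
expressions for one matrix, `∑ h(c q) a q ⊗ b q = ∑ h(c' q) a' q ⊗ b' q`. The right side has rank
at most the number `w'` of `q` with `h(c' q) ≠ 0`. By Sylvester's inequality the left side has rank
at least `min kA w + min kB w - w`, where `w` counts the `q` with `h(c q) ≠ 0` (`min_add_min_le`).
Under the k-rank condition this gives `w ≤ w'` as soon as `w' ≤ Q - r + 1`, with `r` the rank
of `c'`. In other words, hyperplanes of the span of `c'` that are spanned by some of the `c' q`
contain at least as many `c q` as `c' q`.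

The permutation lemma (`card_flat_le`) carries this down to all flats spanned by the `c' q`. On lines
it matches each `c' q` with a unique proportional `c p` (`exists_perm_smul`). By cyclic symmetry the
same holds for the other two factors. Contracting with functionals of small support then shows that
the three permutations agree (`perm_eq`) and that the scalars multiply to one
(`scalars_mul_eq_one`).
-/

/-- The k-rank (Kruskal rank) of a complex matrix: the largest `k` such that
every set of `k` columns is linearly independent over `ℂ`. -/
noncomputable def kRank {m n : ℕ} (M : Matrix (Fin m) (Fin n) ℂ) : ℕ :=
  sSup {k | k ≤ n ∧ ∀ s : Finset (Fin n), s.card = k →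
    LinearIndependent ℂ (fun j : s => fun i : Fin m => M i (j : Fin n))}

open Finset Module

/-- A family `v` has Kruskal rank at least `k`: any at most `k` of its members are linearly
independent. -/
def KruskalRankGE {ι V : Type*} [AddCommGroup V] [Module ℂ V] (k : ℕ) (v : ι → V) : Prop :=
  ∀ s : Finset ι, s.card ≤ k → LinearIndepOn ℂ v (s : Set ι)

/-- The supremum defining `kRank` is attained, and independence passes to smaller column sets. -/
lemma kruskalRankGE_kRank {m n : ℕ} (M : Matrix (Fin m) (Fin n) ℂ) :
    kRank M ≤ n ∧ KruskalRankGE (kRank M) (fun q i => M i q) := by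
  have hmem := Nat.sSup_mem (s := {k | k ≤ n ∧ ∀ s : Finset (Fin n), s.card = k →
    LinearIndependent ℂ (fun j : s => fun i : Fin m => M i (j : Fin n))})
    ⟨0, Nat.zero_le _, fun s hs => by
      obtain rfl := Finset.card_eq_zero.mp hs
      exact linearIndependent_empty_type⟩ ⟨n, fun k hk => hk.1⟩
  refine ⟨hmem.1, fun s hs => ?_⟩
  obtain ⟨t, hst, ht⟩ := Finset.exists_superset_card_eq hs
    (hmem.1.trans (by simp) : kRank M ≤ Fintype.card (Fin n))
  have h2 : LinearIndepOn ℂ (fun (q : Fin n) (i : Fin m) => M i q) (t : Set (Fin n)) :=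
    hmem.2 t ht
  exact h2.mono (by exact_mod_cast hst)

section General

variable {ι U V W : Type*} [AddCommGroup U] [Module ℂ U]
  [AddCommGroup V] [Module ℂ V] [AddCommGroup W] [Module ℂ W]

lemma KruskalRankGE.notMem_span {k : ℕ} {v : ι → V} (hv : KruskalRankGE k v) {p : ι}
    {T : Finset ι} (hp : p ∉ T) (hT : T.card + 1 ≤ k) :
    v p ∉ Submodule.span ℂ (v '' (T : Set ι)) := by
  classical
  have h := hv (insert p T) (by rw [card_insert_of_notMem hp]; exact hT)
  rw [coe_insert] at h
  exact ((linearIndepOn_insert (by simpa using hp)).mp h).2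

lemma KruskalRankGE.exists_dual {k : ℕ} {v : ι → V} (hv : KruskalRankGE k v) {p : ι}
    {T : Finset ι} (hp : p ∉ T) (hT : T.card + 1 ≤ k) :
    ∃ f : Dual ℂ V, f (v p) = 1 ∧ ∀ t ∈ T, f (v t) = 0 := by
  obtain ⟨f, hf, hle⟩ := Submodule.exists_le_ker_of_notMem (hv.notMem_span hp hT)
  refine ⟨(f (v p))⁻¹ • f, by simp [hf], fun t ht => ?_⟩
  have : f (v t) = 0 := hle (Submodule.subset_span ⟨t, by simpa using ht, rfl⟩)
  simp [this]

open Classical in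
/-- Sylvester's rank inequality for the contraction of a tensor by `h`, a sum of
`w = #{q | h (c q) ≠ 0}` rank-one terms: its rank is at least `min kA w + min kB w - w`, and the
second decomposition bounds that rank by `#{q | h (c' q) ≠ 0}`. -/
lemma min_add_min_le [Fintype ι] [FiniteDimensional ℂ U] {kA kB : ℕ} {a a' : ι → U} {b b' : ι → V}
    {c c' : ι → W} (ha : KruskalRankGE kA a) (hb : KruskalRankGE kB b)
    (heq : ∀ (g : Dual ℂ V) (h : Dual ℂ W),
      ∑ q, (g (b' q) * h (c' q)) • a' q = ∑ q, (g (b q) * h (c q)) • a q)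
    (h : Dual ℂ W) :
    min kA #{q | h (c q) ≠ 0} + min kB #{q | h (c q) ≠ 0} ≤
      #{q | h (c q) ≠ 0} + #{q | h (c' q) ≠ 0} := by
  set S : Finset ι := {q | h (c q) ≠ 0} with hS
  set S' : Finset ι := {q | h (c' q) ≠ 0} with hS'
  let E : Dual ℂ V →ₗ[ℂ] (S → ℂ) :=
    LinearMap.pi fun q => (Dual.eval ℂ V (b q) : Dual ℂ V →ₗ[ℂ] ℂ)
  let F : (S → ℂ) →ₗ[ℂ] U := Fintype.linearCombination ℂ fun q : S => h (c q) • a q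
  have hFE : ∀ g, F (E g) = ∑ q, (g (b' q) * h (c' q)) • a' q := by
    intro g
    rw [heq]
    simp only [F, E, Fintype.linearCombination_apply, LinearMap.pi_apply, Dual.eval_apply,
      smul_smul]
    rw [Finset.sum_coe_sort S (fun q => (g (b q) * h (c q)) • a q)]
    refine Finset.sum_subset (Finset.subset_univ _) fun q _ hq => ?_
    have : h (c q) = 0 := by simpa [hS] using hq
    simp [this]
  -- The rank of the composite is at most the size of the second support.
  have h1 : finrank ℂ ((LinearMap.range E).map F) ≤ #S' := by
    have hle : (LinearMap.range E).map F ≤ Submodule.span ℂ ((S'.image a' : Finset U) : Set U) := by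
      rintro _ ⟨_, ⟨g, rfl⟩, rfl⟩
      rw [hFE]
      refine Submodule.sum_mem _ fun q _ => ?_
      by_cases hq : h (c' q) = 0
      · simp [hq]
      · exact Submodule.smul_mem _ _ (Submodule.subset_span (by
          rw [Finset.coe_image]; exact ⟨q, by simpa [hS'] using hq, rfl⟩))
    calc _ ≤ _ := Submodule.finrank_mono hle
      _ ≤ _ := finrank_span_finset_le_card _
      _ ≤ _ := Finset.card_image_le
  have h2 : min kB #S ≤ finrank ℂ (LinearMap.range E) := by
    obtain ⟨T, hTS, hT⟩ := Finset.exists_subset_card_eq (min_le_right kB #S)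
    have hex : ∀ t : T, ∃ g : Dual ℂ V, g (b t) = 1 ∧ ∀ s ∈ T.erase t, g (b s) = 0 := fun t =>
      hb.exists_dual (Finset.notMem_erase _ _) (by
        rw [Finset.card_erase_add_one t.2, hT]; exact min_le_left _ _)
    choose g hg1 hg0 using hex
    have hli : LinearIndependent ℂ
        (fun t : T => (⟨E (g t), g t, rfl⟩ : LinearMap.range E)) := by
      rw [Fintype.linearIndependent_iff]
      intro x hx t
      have := congrArg (fun y : LinearMap.range E => (y : S → ℂ) ⟨t, hTS t.2⟩) hx
      simp only [AddSubmonoidClass.coe_finsetSum, Finset.sum_apply, Submodule.coe_smul,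
        Pi.smul_apply, E, LinearMap.pi_apply, Dual.eval_apply, smul_eq_mul] at this
      rw [Finset.sum_eq_single t] at this
      · simpa [hg1] using this
      · intro s _ hst
        rw [hg0 s t (Finset.mem_erase.mpr ⟨fun h => hst (Subtype.ext h.symm), t.2⟩), mul_zero]
      · simp
    simpa [hT] using hli.fintype_card_le_finrank
  have h3 : min kA #S ≤ finrank ℂ (LinearMap.range F) := by
    obtain ⟨T, hTS, hT⟩ := Finset.exists_subset_card_eq (min_le_right kA #S)
    have hli := ha T (hT.trans_le (min_le_left _ _))
    have hle : Submodule.span ℂ (Set.range fun t : T => a t) ≤ LinearMap.range F := by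
      rw [Submodule.span_le]
      rintro _ ⟨t, rfl⟩
      have hne : h (c t) ≠ 0 := by simpa [hS] using hTS t.2
      refine ⟨Pi.single ⟨t, hTS t.2⟩ (h (c t))⁻¹, ?_⟩
      simp [F, Fintype.linearCombination_apply_single, hne]
    have := Submodule.finrank_mono hle
    rw [finrank_span_eq_card (b := fun t : T => a t) hli] at this
    simpa [hT] using this
  have h4 := LinearMap.finrank_range_add_finrank_ker F
  have h5 := LinearMap.finrank_range_add_finrank_ker (F.domRestrict (LinearMap.range E))
  have h6 : finrank ℂ (LinearMap.ker (F.domRestrict (LinearMap.range E))) ≤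
      finrank ℂ (LinearMap.ker F) := by
    rw [LinearMap.ker_domRestrict]
    rw [← LinearMap.finrank_range_of_inj (f := (LinearMap.range E).subtype.domRestrict
      ((LinearMap.ker F).comap (LinearMap.range E).subtype)) ?_]
    · apply Submodule.finrank_mono
      rintro _ ⟨x, rfl⟩
      exact x.2
    · exact fun x y hxy => Subtype.ext (Subtype.ext hxy)
  rw [LinearMap.range_domRestrict] at h5
  simp only [finrank_fintype_fun_eq_card, Fintype.card_coe] at h4
  omega

open Classical in
/-- Kruskal's permutation lemma, in terms of flats: suppose the `c q` lie in the span of the `c' q`,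
of dimension `r`, and every hyperplane containing at least `r - 1` of the `c' q` contains at least as
many `c q` as `c' q`. Then so does every flat spanned by some of the `c' q`. The proof is a downward
induction: the flats covering a given flat partition the vectors `c' q` outside it. -/
lemma card_flat_le [Fintype ι] [FiniteDimensional ℂ W] {c c' : ι → W}
    (hspan : ∀ q, c q ∈ Submodule.span ℂ (Set.range c'))
    (hw : ∀ h : Dual ℂ W, #{q | h (c' q) ≠ 0} + finrank ℂ (Submodule.span ℂ (Set.range c')) ≤
      Fintype.card ι + 1 → #{q | h (c q) ≠ 0} ≤ #{q | h (c' q) ≠ 0})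
    (X : Submodule ℂ W) :
    ∀ s : Set ι, X = Submodule.span ℂ (Set.image c' s) → #{q | c' q ∈ X} ≤ #{q | c q ∈ X} := by
  induction X using WellFoundedGT.induction with
  | ind X ih =>
  intro s hs
  set Y := Submodule.span ℂ (Set.range c') with hY
  set G : Finset ι := {q | c' q ∉ X} with hG
  set G₀ : Finset ι := {q | c q ∉ X} with hG₀
  set P : Finset (Submodule ℂ W) := G.image (fun q => Submodule.span ℂ {c' q} ⊔ X) with hP
  have hN : #{q | c' q ∈ X} + #G = Fintype.card ι :=
    Finset.card_filter_add_card_filter_not (s := univ) (fun q => c' q ∈ X)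
  have hM : #{q | c q ∈ X} + #G₀ = Fintype.card ι :=
    Finset.card_filter_add_card_filter_not (s := univ) (fun q => c q ∈ X)
  have hXY : X ≤ Y := hs ▸ Submodule.span_mono (Set.image_subset_range _ _)
  -- Every flat in `P` covers `X`, so it is generated over `X` by any of its vectors outside `X`.
  have hcov : ∀ Z ∈ P, ∀ v ∈ Z, v ∉ X → Submodule.span ℂ {v} ⊔ X = Z := by
    intro Z hZ v hv hvX
    obtain ⟨q, hq, rfl⟩ := Finset.mem_image.mp hZ
    have hc := Submodule.covBy_span_singleton_sup (K := ℂ) (x := c' q) (s := X)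
      (by simpa [hG] using hq)
    have hlt := (Submodule.covBy_span_singleton_sup (K := ℂ) hvX).lt
    exact (hc.eq_or_eq hlt.le (sup_le (by simpa using hv) le_sup_right)).resolve_left hlt.ne'
  have hcount : ∀ d : ι → W, ∀ Z ∈ P, #{q | d q ∈ Z} = #{q | d q ∈ X} +
      #{q ∈ {q | d q ∉ X} | Submodule.span ℂ {d q} ⊔ X = Z} := by
    intro d Z hZ
    have hXZ : X ≤ Z := by
      obtain ⟨q, hq, rfl⟩ := Finset.mem_image.mp hZ
      exact le_sup_right
    rw [← Finset.card_union_of_disjoint]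
    · congr 1
      ext q
      simp only [mem_filter, mem_univ, true_and, mem_union]
      constructor
      · intro hq
        by_cases hqX : d q ∈ X
        · exact Or.inl hqX
        · exact Or.inr ⟨hqX, hcov Z hZ _ hq hqX⟩
      · rintro (hq | ⟨-, rfl⟩)
        · exact hXZ hq
        · exact Submodule.mem_sup_left (Submodule.mem_span_singleton_self _)
    · rw [Finset.disjoint_left]
      intro q hq hq'
      simp only [mem_filter, mem_univ, true_and] at hq hq'
      exact hq'.1 hq
  rcases Nat.lt_or_ge 1 (#P) with hP2 | hP1
  -- With `N`, `M` the numbers of `c' q`, `c q` in `X`, summing the induction hypothesis over `P`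
  -- gives `(#P - 1) * N ≤ (#P - 1) * M`.
  · have hle : ∑ Z ∈ P, #{q | c' q ∈ Z} ≤ ∑ Z ∈ P, #{q | c q ∈ Z} := by
      refine Finset.sum_le_sum fun Z hZ => ?_
      obtain ⟨q, hq, rfl⟩ := Finset.mem_image.mp hZ
      refine ih _ (Submodule.covBy_span_singleton_sup (by simpa [hG] using hq)).lt
        (insert q s) ?_
      rw [Set.image_insert_eq, Submodule.span_insert, hs]
    rw [Finset.sum_congr rfl (hcount c'), Finset.sum_congr rfl (hcount c), Finset.sum_add_distrib,
      Finset.sum_add_distrib, ← Finset.card_eq_sum_card_fiberwise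
        (fun q hq => Finset.mem_coe.mpr (Finset.mem_image_of_mem _ hq))] at hle
    have hle2 : ∑ Z ∈ P, #{q ∈ G₀ | Submodule.span ℂ {c q} ⊔ X = Z} ≤ #G₀ := by
      rw [Finset.sum_card_fiberwise_eq_card_filter]
      exact Finset.card_filter_le _ _
    simp only [Finset.sum_const, smul_eq_mul] at hle
    by_contra hlt
    push Not at hlt
    obtain ⟨m, hm⟩ : ∃ m, #P = m + 2 := ⟨#P - 2, by omega⟩
    rw [hm] at hle
    nlinarith
  -- At most one flat covers `X`, so `X` is the whole span `Y` or a hyperplane in it.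
  by_cases hall : ∀ q, c' q ∈ X
  · have hYX : Y ≤ X := Submodule.span_le.mpr (by rintro _ ⟨q, rfl⟩; exact hall q)
    have : #{q | c q ∈ X} = Fintype.card ι := by
      rw [Finset.filter_true_of_mem fun q _ => hYX (hspan q), Finset.card_univ]
    omega
  push Not at hall
  obtain ⟨q₀, hq₀⟩ := hall
  have hYeq : Y ≤ Submodule.span ℂ {c' q₀} ⊔ X := by
    rw [hY, Submodule.span_le]
    rintro _ ⟨q, rfl⟩
    by_cases hq : c' q ∈ X
    · exact Submodule.mem_sup_right hq
    · have h1 : Submodule.span ℂ {c' q} ⊔ X ∈ P := Finset.mem_image_of_mem _ (by simpa [hG] using hq)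
      have h2 : Submodule.span ℂ {c' q₀} ⊔ X ∈ P :=
        Finset.mem_image_of_mem _ (by simpa [hG] using hq₀)
      rw [Finset.card_le_one.mp hP1 _ h2 _ h1]
      exact Submodule.mem_sup_left (Submodule.mem_span_singleton_self _)
  obtain ⟨f, hf, hXf⟩ := Submodule.exists_le_ker_of_notMem hq₀
  -- Inside `Y`, the kernel of `f` is exactly `X`.
  have hker : ∀ v ∈ Y, f v ≠ 0 ↔ v ∉ X := by
    intro v hv
    refine not_congr ⟨fun h0 => ?_, fun h0 => hXf h0⟩
    obtain ⟨y, hy, x, hx, rfl⟩ := Submodule.mem_sup.mp (hYeq hv)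
    obtain ⟨t, rfl⟩ := Submodule.mem_span_singleton.mp hy
    have hfx : f x = 0 := hXf hx
    have ht : t = 0 := by simpa [hfx, hf] using h0
    simpa [ht] using hx
  have hc' : ∀ q, c' q ∈ Y := fun q => Submodule.subset_span ⟨q, rfl⟩
  have e1 : #{q | f (c' q) ≠ 0} = #G := by
    congr 1; ext q; simpa [hG] using hker _ (hc' q)
  have e2 : #{q | f (c q) ≠ 0} = #G₀ := by
    congr 1; ext q; simpa [hG₀] using hker _ (hspan q)
  have hrX : finrank ℂ X ≤ #{q | c' q ∈ X} := by
    have hle : X ≤ Submodule.span ℂ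
        ((({q | c' q ∈ X} : Finset ι).image c' : Finset W) : Set W) := by
      conv_lhs => rw [hs]
      refine Submodule.span_mono ?_
      rintro _ ⟨q, hq, rfl⟩
      rw [Finset.coe_image]
      refine ⟨q, ?_, rfl⟩
      simp only [coe_filter, mem_univ, true_and, Set.mem_ofPred_eq]
      rw [hs]
      exact Submodule.subset_span ⟨q, hq, rfl⟩
    calc _ ≤ _ := Submodule.finrank_mono hle
      _ ≤ _ := finrank_span_finset_le_card _
      _ ≤ _ := Finset.card_image_le
  have hrY : finrank ℂ Y ≤ 1 + finrank ℂ X :=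
    calc _ ≤ _ := Submodule.finrank_mono hYeq
      _ ≤ _ := Submodule.finrank_add_le_finrank_add_finrank _ _
      _ ≤ _ := Nat.add_le_add_right (by simpa using finrank_span_le_card (R := ℂ) {c' q₀}) _
  have := hw f (by omega)
  omega

open Classical in
/-- Uniqueness of one factor, up to scaling and permutation. The rank inequality verifies the
hypotheses of `card_flat_le`, whose conclusion for the flats of dimension zero and one says that
each `c' q` is nonzero and spans a line containing exactly one `c p`. -/
lemma exists_perm_smul [Fintype ι] [FiniteDimensional ℂ U] [FiniteDimensional ℂ W] {kA kB kC : ℕ}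
    {a a' : ι → U} {b b' : ι → V} {c c' : ι → W} (ha : KruskalRankGE kA a)
    (hb : KruskalRankGE kB b) (hc : KruskalRankGE kC c)
    (hA : kA ≤ Fintype.card ι) (hB : kB ≤ Fintype.card ι) (hC : kC ≤ Fintype.card ι)
    (hk : 2 * Fintype.card ι + 2 ≤ kA + kB + kC)
    (heq : ∀ (g : Dual ℂ V) (h : Dual ℂ W),
      ∑ q, (g (b' q) * h (c' q)) • a' q = ∑ q, (g (b q) * h (c q)) • a q) :
    ∃ (σ : Equiv.Perm ι) (nu : ι → ℂ), (∀ q, nu q ≠ 0) ∧ ∀ q, c' q = nu q • c (σ q) := by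
  have hmin := min_add_min_le ha hb heq
  have hcard : ∀ h : Dual ℂ W, #{q | h (c q) ≠ 0} ≤ Fintype.card ι := fun h => Finset.card_le_univ _
  have hspan : ∀ q, c q ∈ Submodule.span ℂ (Set.range c') := by
    intro q
    by_contra hq
    obtain ⟨f, hf, hle⟩ := Submodule.exists_le_ker_of_notMem hq
    have h0 : #{q | f (c' q) ≠ 0} = 0 := by
      rw [Finset.card_eq_zero, Finset.filter_eq_empty_iff]
      intro p _
      simpa using hle (Submodule.subset_span ⟨p, rfl⟩)
    have h1 : 0 < #{q | f (c q) ≠ 0} := Finset.card_pos.mpr ⟨q, by simpa using hf⟩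
    have := hmin f
    have := hcard f
    omega
  have hrank : kC ≤ finrank ℂ (Submodule.span ℂ (Set.range c')) := by
    obtain ⟨T, -, hT⟩ := Finset.exists_subset_card_eq (s := (univ : Finset ι)) (n := kC)
      (by simpa using hC)
    have hli := hc T hT.le
    have hle : Submodule.span ℂ (Set.range fun t : T => c t) ≤
        Submodule.span ℂ (Set.range c') := by
      rw [Submodule.span_le]
      rintro _ ⟨t, rfl⟩
      exact hspan t
    have := Submodule.finrank_mono hle
    rw [finrank_span_eq_card (b := fun t : T => c t) hli] at this
    simpa [hT] using this
  have hflat := fun s => card_flat_le hspan (fun h hh => by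
    have := hmin h
    have := hcard h
    omega) _ s rfl
  have hne : ∀ q, c q ≠ 0 := fun q h0 => hc.notMem_span (p := q) (T := ∅) (by simp)
    (by simp; omega) (by simp [h0])
  -- Distinct `c q` lie on distinct lines.
  have hpair : ∀ p q v, c p ∈ Submodule.span ℂ {v} → c q ∈ Submodule.span ℂ {v} → p = q := by
    intro p q v hp hq
    by_contra hpq
    refine hc.notMem_span (p := p) (T := {q}) (by simpa using hpq) (by simp; omega) ?_
    obtain ⟨x, hx⟩ := Submodule.mem_span_singleton.mp hp
    obtain ⟨y, hy⟩ := Submodule.mem_span_singleton.mp hq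
    have hy0 : y ≠ 0 := by rintro rfl; exact hne q (by simpa using hy.symm)
    simp only [coe_singleton, Set.image_singleton]
    rw [Submodule.mem_span_singleton]
    exact ⟨x * y⁻¹, by rw [← hy, smul_smul, ← hx]; congr 1; field_simp⟩
  have hne' : ∀ q, c' q ≠ 0 := by
    intro q h0
    have := hflat ∅
    have h1 : 0 < #{q | c' q ∈ Submodule.span ℂ (Set.image c' (∅ : Set ι))} :=
      Finset.card_pos.mpr ⟨q, by simpa using h0⟩
    obtain ⟨p, hp⟩ := Finset.card_pos.mp (h1.trans_le this)
    exact hne p (by simpa using hp)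
  have hline : ∀ q, #{p | c' p ∈ Submodule.span ℂ {c' q}} ≤
      #{p | c p ∈ Submodule.span ℂ {c' q}} := by
    intro q
    simpa using hflat {q}
  have hline1 : ∀ q, #{p | c p ∈ Submodule.span ℂ {c' q}} ≤ 1 := fun q =>
    Finset.card_le_one.mpr fun p hp r hr =>
      hpair p r (c' q) (by simpa using hp) (by simpa using hr)
  have hex : ∀ q, ∃ p, c p ∈ Submodule.span ℂ {c' q} := by
    intro q
    have h1 : 0 < #{p | c' p ∈ Submodule.span ℂ {c' q}} :=
      Finset.card_pos.mpr ⟨q, by simp⟩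
    obtain ⟨p, hp⟩ := Finset.card_pos.mp (h1.trans_le (hline q))
    exact ⟨p, by simpa using hp⟩
  choose σ hσ using hex
  have hsc : ∀ q, ∃ x : ℂ, x ≠ 0 ∧ c' q = x • c (σ q) := by
    intro q
    obtain ⟨x, hx⟩ := Submodule.mem_span_singleton.mp (hσ q)
    have hx0 : x ≠ 0 := by rintro rfl; exact hne (σ q) (by simpa using hx.symm)
    exact ⟨x⁻¹, inv_ne_zero hx0, by rw [← hx, smul_smul, inv_mul_cancel₀ hx0, one_smul]⟩
  choose nu hnu0 hnu using hsc
  have hinj : Function.Injective σ := by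
    intro p q hpq
    refine Finset.card_le_one.mp ((hline q).trans (hline1 q)) p ?_ q ?_
    · simp only [mem_filter, mem_univ, true_and]
      rw [hnu p, hpq]
      exact Submodule.smul_mem _ _ (hσ q)
    · simp
  exact ⟨Equiv.ofBijective σ (Finite.injective_iff_bijective.mp hinj), nu, hnu0, hnu⟩

open Classical in
/-- A functional that separates `c p` from `c r` and vanishes on at least `k - 1` of the
vectors. -/
lemma exists_small_support [Fintype ι] {k : ℕ} {c : ι → W} (hc : KruskalRankGE k c)
    (hk : 2 ≤ k) (hk' : k ≤ Fintype.card ι) {p r : ι} (hpr : r ≠ p) :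
    ∃ h : Dual ℂ W, h (c p) = 1 ∧ h (c r) = 0 ∧ #{q | h (c q) ≠ 0} + k ≤ Fintype.card ι + 1 := by
  obtain ⟨T, hrT, hTp, hT⟩ := Finset.exists_subsuperset_card_eq (s := {r})
    (t := (univ : Finset ι).erase p) (n := k - 1) (by simpa using hpr) (by simp; omega)
    (by rw [Finset.card_erase_of_mem (mem_univ _), Finset.card_univ]; omega)
  have hpT : p ∉ T := fun h => by simpa using hTp h
  obtain ⟨h, h1, h0⟩ := hc.exists_dual hpT (by omega)
  refine ⟨h, h1, h0 r (hrT (by simp)), ?_⟩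
  have hsub : ({q | h (c q) ≠ 0} : Finset ι) ⊆ Tᶜ := by
    intro q hq
    simp only [mem_filter, mem_univ, true_and] at hq
    exact Finset.mem_compl.mpr fun hqT => hq (h0 q hqT)
  have := Finset.card_le_card hsub
  rw [Finset.card_compl] at this
  omega

/-- The permutations matching two of the factors agree. If `τ q₀ ≠ σ q₀`, contract with a functional
of small support `S` that contains `σ q₀` but not `τ q₀`. Comparing the column spaces of both
decompositions puts `a '' S` into the span of `a '' R`, where `R = τ (σ⁻¹ S)`; since `#S < kA`, this
forces `S = R`, which contains `τ q₀`. -/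
lemma perm_eq [Fintype ι] {kA kB kC : ℕ}
    {a a' : ι → U} {b b' : ι → V} {c c' : ι → W} (ha : KruskalRankGE kA a)
    (hb : KruskalRankGE kB b) (hc : KruskalRankGE kC c)
    (hA : kA ≤ Fintype.card ι) (hB : kB ≤ Fintype.card ι) (hC : kC ≤ Fintype.card ι)
    (hk : 2 * Fintype.card ι + 2 ≤ kA + kB + kC)
    (heq : ∀ (g : Dual ℂ V) (h : Dual ℂ W),
      ∑ q, (g (b' q) * h (c' q)) • a' q = ∑ q, (g (b q) * h (c q)) • a q)
    {σ τ : Equiv.Perm ι} {nu lam : ι → ℂ}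
    (hσ : ∀ q, c' q = nu q • c (σ q))
    (hτ : ∀ q, a' q = lam q • a (τ q)) : τ = σ := by
  classical
  ext q₀
  by_contra hne
  obtain ⟨h, h1, h0, hcard⟩ := exists_small_support hc (by omega) hC hne
  set S : Finset ι := {q | h (c q) ≠ 0} with hS
  set R : Finset ι := S.image (fun s => τ (σ.symm s)) with hR
  have hRS : #R = #S := Finset.card_image_of_injective _ (τ.injective.comp σ.symm.injective)
  have hSR : S ⊆ R := by
    intro s hs
    by_contra hsR
    refine ha.notMem_span hsR (by omega) ?_
    obtain ⟨g, hg1, hg0⟩ := hb.exists_dual (p := s) (T := S.erase s) (Finset.notMem_erase _ _)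
      (by rw [Finset.card_erase_add_one hs]; omega)
    have hE := heq g h
    rw [Finset.sum_eq_single (a := s) (f := fun q => (g (b q) * h (c q)) • a q)] at hE
    · have hs0 : h (c s) ≠ 0 := by simpa [hS] using hs
      rw [hg1, one_mul] at hE
      refine ((Submodule.span ℂ (a '' (R : Set ι))).smul_mem_iff hs0).mp ?_
      rw [← hE]
      refine Submodule.sum_mem _ fun q _ => ?_
      by_cases hq : h (c (σ q)) = 0
      · simp [hσ, hq]
      · rw [hτ q]
        refine Submodule.smul_mem _ _ (Submodule.smul_mem _ _ (Submodule.subset_span ⟨_, ?_, rfl⟩))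
        exact Finset.mem_coe.mpr (Finset.mem_image.mpr ⟨σ q, by simpa [hS] using hq, by simp⟩)
    · intro q _ hqs
      by_cases hq : h (c q) = 0
      · simp [hq]
      · rw [hg0 q (Finset.mem_erase.mpr ⟨hqs, by simpa [hS] using hq⟩)]; simp
    · simp
  have hmem : τ q₀ ∈ S := by
    rw [Finset.eq_of_subset_of_card_le hSR hRS.le]
    exact Finset.mem_image.mpr ⟨σ q₀, by simp [hS, h1], by simp⟩
  simp [hS, h0] at hmem

/-- The scalars relating the rank-one terms multiply to one: contract with functionals dual to
the `q₀`-th term on a support small enough for the first two factors to be independent. -/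
lemma scalars_mul_eq_one [Fintype ι] {kA kB kC : ℕ}
    {a a' : ι → U} {b b' : ι → V} {c c' : ι → W} (ha : KruskalRankGE kA a)
    (hb : KruskalRankGE kB b) (hc : KruskalRankGE kC c)
    (hA : kA ≤ Fintype.card ι) (hB : kB ≤ Fintype.card ι) (hC : kC ≤ Fintype.card ι)
    (hk : 2 * Fintype.card ι + 2 ≤ kA + kB + kC)
    (heq : ∀ (f : Dual ℂ U) (g : Dual ℂ V) (h : Dual ℂ W),
      ∑ q, f (a' q) * g (b' q) * h (c' q) = ∑ q, f (a q) * g (b q) * h (c q))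
    {σ : Equiv.Perm ι} {lam mu nu : ι → ℂ}
    (hlam : ∀ q, a' q = lam q • a (σ q)) (hmu : ∀ q, b' q = mu q • b (σ q))
    (hnu : ∀ q, c' q = nu q • c (σ q)) (q₀ : ι) : lam q₀ * mu q₀ * nu q₀ = 1 := by
  classical
  obtain ⟨r, hr⟩ : ∃ r, r ≠ σ q₀ := by
    have : 1 < Fintype.card ι := by omega
    have := Fintype.one_lt_card_iff_nontrivial.mp this
    exact exists_ne _
  obtain ⟨h, h1, -, hcard⟩ := exists_small_support hc (by omega) hC hr
  set S : Finset ι := {q | h (c q) ≠ 0} with hS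
  have hp : σ q₀ ∈ S := by simp [hS, h1]
  obtain ⟨f, hf1, hf0⟩ := ha.exists_dual (p := σ q₀) (T := S.erase (σ q₀))
    (Finset.notMem_erase _ _) (by rw [Finset.card_erase_add_one hp]; omega)
  obtain ⟨g, hg1, hg0⟩ := hb.exists_dual (p := σ q₀) (T := S.erase (σ q₀))
    (Finset.notMem_erase _ _) (by rw [Finset.card_erase_add_one hp]; omega)
  have hz : ∀ q, q ≠ σ q₀ → f (a q) * g (b q) * h (c q) = 0 := by
    intro q hq
    by_cases hq0 : h (c q) = 0
    · simp [hq0]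
    · rw [hf0 q (Finset.mem_erase.mpr ⟨hq, by simpa [hS] using hq0⟩)]; simp
  have hE := heq f g h
  rw [Finset.sum_eq_single q₀, Finset.sum_eq_single (σ q₀)] at hE
  · simpa [hlam, hmu, hnu, hf1, hg1, h1] using hE
  · exact fun q _ hq => hz q hq
  · simp
  · intro q _ hq
    have := hz (σ q) (σ.injective.ne hq)
    simp only [hlam, hmu, hnu, map_smul, smul_eq_mul]
    linear_combination (lam q * mu q * nu q) * this
  · simp

/-- A trilinear identity tested against all functionals gives the vector identity in the first
factor. -/
lemma vector_identity [Fintype ι] {a a' : ι → U} {b b' : ι → V} {c c' : ι → W}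
    (heq : ∀ (f : Dual ℂ U) (g : Dual ℂ V) (h : Dual ℂ W),
      ∑ q, f (a' q) * g (b' q) * h (c' q) = ∑ q, f (a q) * g (b q) * h (c q))
    (g : Dual ℂ V) (h : Dual ℂ W) :
    ∑ q, (g (b' q) * h (c' q)) • a' q = ∑ q, (g (b q) * h (c q)) • a q := by
  rw [← sub_eq_zero, ← Module.forall_dual_apply_eq_zero_iff ℂ]
  intro f
  rw [map_sub, sub_eq_zero, map_sum, map_sum]
  have := heq f g h
  simp only [map_smul, smul_eq_mul]
  convert this using 2 <;> ring

end General

/-- Kruskal's uniqueness theorem for third-order canonical polyadic decomposition. -/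
theorem kruskal_cpd_uniqueness {I₁ I₂ I₃ Q : ℕ}
    (A : Matrix (Fin I₁) (Fin Q) ℂ) (B : Matrix (Fin I₂) (Fin Q) ℂ)
    (C : Matrix (Fin I₃) (Fin Q) ℂ)
    (hKruskal : 2 * Q + 2 ≤ kRank A + kRank B + kRank C)
    (A' : Matrix (Fin I₁) (Fin Q) ℂ) (B' : Matrix (Fin I₂) (Fin Q) ℂ)
    (C' : Matrix (Fin I₃) (Fin Q) ℂ)
    (heq : ∀ (i : Fin I₁) (j : Fin I₂) (k : Fin I₃),
      ∑ q : Fin Q, A' i q * B' j q * C' k q = ∑ q : Fin Q, A i q * B j q * C k q) :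
    ∃ (σ : Equiv.Perm (Fin Q)) (lam mu nu : Fin Q → ℂ),
      (∀ q, lam q ≠ 0 ∧ mu q ≠ 0 ∧ nu q ≠ 0 ∧ lam q * mu q * nu q = 1) ∧
      (∀ (q : Fin Q) (i : Fin I₁), A' i q = lam q * A i (σ q)) ∧
      (∀ (q : Fin Q) (j : Fin I₂), B' j q = mu q * B j (σ q)) ∧
      (∀ (q : Fin Q) (k : Fin I₃), C' k q = nu q * C k (σ q)) := by
  obtain ⟨hA, ha⟩ := kruskalRankGE_kRank A
  obtain ⟨hB, hb⟩ := kruskalRankGE_kRank B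
  obtain ⟨hC, hc⟩ := kruskalRankGE_kRank C
  have hfun : ∀ {n : ℕ} (f : Dual ℂ (Fin n → ℂ)) (v : Fin n → ℂ),
      f v = ∑ i, v i * f (Pi.single i 1) := by
    intro n f v
    conv_lhs => rw [pi_eq_sum_univ' v, map_sum]
    refine Finset.sum_congr rfl fun i _ => ?_
    rw [map_smul, smul_eq_mul]
  have key : ∀ (A : Matrix (Fin I₁) (Fin Q) ℂ) (B : Matrix (Fin I₂) (Fin Q) ℂ)
      (C : Matrix (Fin I₃) (Fin Q) ℂ) (f : Dual ℂ (Fin I₁ → ℂ)) (g : Dual ℂ (Fin I₂ → ℂ))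
      (h : Dual ℂ (Fin I₃ → ℂ)),
      ∑ q, f (fun i => A i q) * g (fun j => B j q) * h (fun k => C k q) =
      ∑ i, ∑ j, ∑ k, (∑ q, A i q * B j q * C k q) *
        (f (Pi.single i 1) * g (Pi.single j 1) * h (Pi.single k 1)) := by
    intro A B C f g h
    simp_rw [Finset.sum_mul]
    simp_rw [Finset.sum_comm (t := (Finset.univ : Finset (Fin Q)))]
    refine Finset.sum_congr rfl fun q _ => ?_
    rw [hfun f, hfun g, hfun h, Finset.sum_mul_sum, Finset.sum_mul]
    refine Finset.sum_congr rfl fun i _ => ?_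
    rw [Finset.sum_mul_sum]
    refine Finset.sum_congr rfl fun j _ => Finset.sum_congr rfl fun k _ => ?_
    ring
  have htri : ∀ (f : Dual ℂ (Fin I₁ → ℂ)) (g : Dual ℂ (Fin I₂ → ℂ)) (h : Dual ℂ (Fin I₃ → ℂ)),
      ∑ q, f (fun i => A' i q) * g (fun j => B' j q) * h (fun k => C' k q) =
      ∑ q, f (fun i => A i q) * g (fun j => B j q) * h (fun k => C k q) := by
    intro f g h
    simp_rw [key, heq]
  have hABC := vector_identity htri
  have hBCA := vector_identity (fun g h f => by
    have := htri f g h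
    convert this using 2 <;> ring :
    ∀ (g : Dual ℂ (Fin I₂ → ℂ)) (h : Dual ℂ (Fin I₃ → ℂ)) (f : Dual ℂ (Fin I₁ → ℂ)),
      ∑ q, g (fun j => B' j q) * h (fun k => C' k q) * f (fun i => A' i q) =
      ∑ q, g (fun j => B j q) * h (fun k => C k q) * f (fun i => A i q))
  have hCAB := vector_identity (fun h f g => by
    have := htri f g h
    convert this using 2 <;> ring :
    ∀ (h : Dual ℂ (Fin I₃ → ℂ)) (f : Dual ℂ (Fin I₁ → ℂ)) (g : Dual ℂ (Fin I₂ → ℂ)),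
      ∑ q, h (fun k => C' k q) * f (fun i => A' i q) * g (fun j => B' j q) =
      ∑ q, h (fun k => C k q) * f (fun i => A i q) * g (fun j => B j q))
  have hQ : Fintype.card (Fin Q) = Q := Fintype.card_fin Q
  obtain ⟨σ, nu, hnu0, hnu⟩ := exists_perm_smul ha hb hc (by omega) (by omega) (by omega)
    (by omega) hABC
  obtain ⟨τ, lam, hlam0, hlam⟩ := exists_perm_smul hb hc ha (by omega) (by omega) (by omega)
    (by omega) hBCA
  obtain ⟨ρ, mu, hmu0, hmu⟩ := exists_perm_smul hc ha hb (by omega) (by omega) (by omega)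
    (by omega) hCAB
  obtain rfl : τ = σ := perm_eq ha hb hc (by omega) (by omega) (by omega) (by omega) hABC
    hnu hlam
  obtain rfl : ρ = τ := perm_eq hb hc ha (by omega) (by omega) (by omega) (by omega) hBCA
    hlam hmu
  exact ⟨ρ, lam, mu, nu, fun q => ⟨hlam0 q, hmu0 q, hnu0 q,
    scalars_mul_eq_one ha hb hc (by omega) (by omega) (by omega) (by omega) htri hlam hmu hnu q⟩,
    fun q i => congrFun (hlam q) i, fun q j => congrFun (hmu q) j, fun q k => congrFun (hnu q) k⟩
end

section
/- Generalized Kruskal uniqueness theorem for block term decomposition into rank-(L_q,L_q,1) terms: Let Q ≥ 1 and block sizes L_1,…,L_Q ≥ 1; for each q let A_q ∈ ℂ^{I₁×L_q} and B_q ∈ ℂ^{I₂×L_q} both have full column rank L_q, and let c_q ∈ ℂ^{I₃}. Assume I₁ ≥ max_q L_q, I₂ ≥ max_q L_q, I₁·I₂ ≥ ∑_{q=1}^{Q} L_q², and k'_A + k'_B + k_C ≥ 2Q + 2, where k'_A (resp. k'_B) is the generalized k-rank of the block-partitioned matrix A = [A_1 … A_Q] (resp. B = [B_1 … B_Q]) and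 k_C is the k-rank of C = [c_1 … c_Q]. Define the tensor 𝒴(i,j,k) = ∑_{q=1}^{Q} (A_q B_qᵀ)(i,j)·c_q(k). Then for any alternative factors Ā_q ∈ ℂ^{I₁×L_q}, B̄_q ∈ ℂ^{I₂×L_q}, c̄_q ∈ ℂ^{I₃} producing the same tensor 𝒴, there exist a permutation σ of {1,…,Q} with L_{σ(q)} = L_q for all q, invertible matrices M_q, N_q ∈ ℂ^{L_q×L_q}, and nonzero scalars λ_q with λ_q·M_q·N_qᵀ = I_{L_q}, such that Ā_q = A_{σ(q)}·M_q, B̄_q = B_{σ(q)}·N_q, and c̄_q = λ_q·c_{σ(q)} for every q. -/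
/-!
Write `E q = A q * (B q)ᵀ`, viewed as a linear map, and contract the third mode of the tensor with a
vector `x`: both decompositions give the same pencil `∑ c q x • E q = ∑ c' q x • E' q`. Put
`t = k'_A + k'_B - Q` and `n = Q + 2 - t`. The Kruskal condition says `2 ≤ n ≤ k_C`, hence `2 ≤ t`.

*Rank bound* (`sum_le_finrank_range`). If `T` lies in the support of `y` and has at most `t` elements,
then `∑ y q • E q` has rank at least `∑ q ∈ T, L q`: the support is `X ∪ Y` with `T` in both parts,
`X \ T` and `Y \ T` disjoint, and the columns of the blocks of `A` in `X` and of those of `B` in `Y`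
are independent, so dual vectors to these columns exhibit an invertible minor.

*Generic section* (`exists_generic_subspace`). As any `n` of the `c q` are independent, there is an
`n`-dimensional space `V` of contractions `x` in which no nonzero `x` is killed by `n` of the `c q`.

*Counting inequality* (`zeroSet_sum_le`). Comparing ranks on both sides of the pencil, the total weight
`L` of the indices with `c' q x = 0` is at most the weight of any set `N` that contains all indices
with `c q x = 0` and has at least `n - 2` elements.

*Induction on `n`* (`exists_perm_of_tensor_eq`). For `n = 2` the counting inequality matches the kernel
lines of the `c' i` with those of the `c q` (`exists_perm_of_plane`), and the ranges of the `E q` form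
a direct sum, which forces `E'` to agree with `E` (`eq_of_direct`). For larger `n` it suffices to find
one pair `j, q` of equal weight with `c' j` proportional to `c q` (`exists_matched_pair`): on the
kernel of `c q` both terms disappear and the induction hypothesis matches all the others; the remaining
`E' j` is then a combination of the `E i` that involves `E q` and has rank at most `L q`, so by the
rank bound it is a multiple of `E q`. The pair is found among the indices of largest weight, by means
of the basis dual to `n` heaviest `c' i` (`top_structure`): the counting inequality shows that each
vector of this basis is killed by exactly `n - 1` of the `c q`, of prescribed total weight.

Once `E' i` is a multiple of `E (σ i)`, independence of the `E q` gives the third factors, and left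
inverses of the blocks of `A` and `B` give the matrices `M` and `N` (`exists_factors`).
-/

open Matrix

/-- The generalized k-rank of a block-partitioned matrix `A = [A_1 … A_Q]`:
the largest `k` such that for every choice of `k` distinct blocks, the collection
of all columns of those blocks is linearly independent over `ℂ`. -/
noncomputable def gkRank {m Q : ℕ} (L : Fin Q → ℕ)
    (A : ∀ q : Fin Q, Matrix (Fin m) (Fin (L q)) ℂ) : ℕ :=
  sSup {k | k ≤ Q ∧ ∀ s : Finset (Fin Q), s.card = k →
    LinearIndependent ℂ
      (fun p : Σ q : {q : Fin Q // q ∈ s}, Fin (L q.1) => fun i : Fin m => A p.1 i p.2)}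

/-! ### Weights, dual bases and zero sets -/

/-- A set `J` of heaviest indices, separated from its complement by the weight `m`, outweighs
every set `N` that is not larger, by at least `m` for each missing element of `N`. -/
theorem sum_le_of_isTop {ι : Type*} [DecidableEq ι] (L : ι → ℕ) {J N : Finset ι} {m : ℕ}
    (hJ : ∀ a ∈ J, m ≤ L a) (hJc : ∀ b, b ∉ J → L b ≤ m) (hc : N.card ≤ J.card) :
    ∑ i ∈ N, L i + (J.card - N.card) * m ≤ ∑ i ∈ J, L i := by
  have h1 : ∑ i ∈ N, L i = ∑ i ∈ N ∩ J, L i + ∑ i ∈ N \ J, L i :=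
    (Finset.sum_inter_add_sum_sdiff N J L).symm
  have h2 : ∑ i ∈ J, L i = ∑ i ∈ J ∩ N, L i + ∑ i ∈ J \ N, L i :=
    (Finset.sum_inter_add_sum_sdiff J N L).symm
  have h3 : ∑ i ∈ N \ J, L i ≤ (N \ J).card * m := by
    rw [← smul_eq_mul]
    exact Finset.sum_le_card_nsmul _ _ _ fun i hi => hJc i (Finset.mem_sdiff.1 hi).2
  have h4 : (J \ N).card * m ≤ ∑ i ∈ J \ N, L i := by
    rw [← smul_eq_mul]
    exact Finset.card_nsmul_le_sum _ _ _ fun i hi => hJ i (Finset.mem_sdiff.1 hi).1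
  have h5 : (N \ J).card + (J.card - N.card) = (J \ N).card := by
    have e1 := Finset.card_inter_add_card_sdiff N J
    have e2 := Finset.card_inter_add_card_sdiff J N
    rw [Finset.inter_comm] at e1
    omega
  rw [Finset.inter_comm] at h1
  rw [← h5, add_mul] at h4
  omega

theorem exists_isTop {ι : Type*} [Fintype ι] [DecidableEq ι] (L : ι → ℕ) (hL : ∀ i, 1 ≤ L i)
    (n : ℕ) (hn : n ≤ Fintype.card ι) :
    ∃ (J : Finset ι) (m : ℕ), J.card = n ∧ 1 ≤ m ∧ (∀ a ∈ J, m ≤ L a) ∧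
      ∀ b, b ∉ J → L b ≤ m := by
  induction n with
  | zero =>
    refine ⟨∅, ∑ i, L i + 1, rfl, by omega, by simp, fun b _ => ?_⟩
    have := Finset.single_le_sum (f := L) (fun i _ => Nat.zero_le _) (Finset.mem_univ b)
    omega
  | succ n ih =>
    obtain ⟨J, m, hJn, hm, h1, h2⟩ := ih (by omega)
    have hne : (Finset.univ \ J).Nonempty := by
      rw [← Finset.card_pos, Finset.card_sdiff_of_subset (Finset.subset_univ _), Finset.card_univ]
      omega
    obtain ⟨a, ha, hmax⟩ := Finset.exists_max_image _ L hne
    have haJ : a ∉ J := (Finset.mem_sdiff.1 ha).2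
    refine ⟨insert a J, L a, by rw [Finset.card_insert_of_notMem haJ, hJn], hL a, ?_, ?_⟩
    · intro b hb
      rcases Finset.mem_insert.1 hb with rfl | hb
      · exact le_rfl
      · exact (h2 a haJ).trans (h1 b hb)
    · intro b hb
      exact hmax b (by simp_all)

/-- A family of `finrank V` functionals without common zero has a dual basis. -/
theorem exists_dual_vectors {V ι : Type*} [AddCommGroup V] [Module ℂ V] [FiniteDimensional ℂ V]
    [DecidableEq ι] (J : Finset ι) (f : ι → Module.Dual ℂ V)
    (hcard : J.card = Module.finrank ℂ V) (hinj : ∀ x, (∀ j ∈ J, f j x = 0) → x = 0) :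
    ∃ x : ι → V, (∀ i ∈ J, ∀ k ∈ J, f k (x i) = if k = i then 1 else 0) ∧
      ∀ v, v = ∑ i ∈ J, f i v • x i := by
  let F : V →ₗ[ℂ] (J → ℂ) := LinearMap.pi fun j => f j
  have hF : Function.Injective F := by
    rw [← LinearMap.ker_eq_bot, LinearMap.ker_eq_bot']
    intro x hx
    exact hinj x fun j hj => congrFun hx ⟨j, hj⟩
  have hS : Function.Surjective F :=
    (LinearMap.injective_iff_surjective_of_finrank_eq_finrank (by simp [hcard])).1 hF
  choose g hg using hS
  have key : ∀ i ∈ J, ∀ k ∈ J, f k (g (fun k : J => if (k : ι) = i then 1 else 0))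
      = if k = i then 1 else 0 := by
    intro i _ k hk
    exact congrFun (hg (fun k : J => if (k : ι) = i then 1 else 0)) ⟨k, hk⟩
  refine ⟨fun i => g (fun k => if (k : ι) = i then 1 else 0), key, fun v => ?_⟩
  rw [← sub_eq_zero]
  apply hinj
  intro j hj
  rw [map_sub, map_sum]
  simp only [map_smul, smul_eq_mul]
  rw [Finset.sum_congr rfl fun i hi => by rw [key i hi j hj]]
  simp [hj]

theorem exists_ne_zero_of_card_lt {V ι : Type*} [AddCommGroup V] [Module ℂ V]
    [FiniteDimensional ℂ V] (J : Finset ι) (f : ι → Module.Dual ℂ V)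
    (hcard : J.card < Module.finrank ℂ V) : ∃ x, x ≠ 0 ∧ ∀ j ∈ J, f j x = 0 := by
  let F : V →ₗ[ℂ] (J → ℂ) := LinearMap.pi fun j => f j
  have : LinearMap.ker F ≠ ⊥ := LinearMap.ker_ne_bot_of_finrank_lt (by simpa using hcard)
  obtain ⟨x, hx, hx0⟩ := Submodule.exists_mem_ne_zero_of_ne_bot this
  exact ⟨x, hx0, fun j hj => congrFun hx ⟨j, hj⟩⟩

/-- The set of indices whose functional vanishes at `x`. -/
noncomputable def zeroSet {V ι : Type*} [AddCommGroup V] [Module ℂ V] [Fintype ι]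
    (c : ι → Module.Dual ℂ V) (x : V) : Finset ι :=
  open Classical in Finset.univ.filter fun q => c q x = 0

theorem mem_zeroSet {V ι : Type*} [AddCommGroup V] [Module ℂ V] [Fintype ι]
    {c : ι → Module.Dual ℂ V} {x : V} {q : ι} : q ∈ zeroSet c x ↔ c q x = 0 := by
  simp [zeroSet]

/-! ### The dual basis of the heaviest coefficients -/

/-- The matrix `c r (x i)`, with `x` dual to `c'` on `J`, is invertible because no nonzero vector
is killed by all `c r`, `r ∈ J`; a nonzero term of the Leibniz formula is the transversal. -/
theorem exists_transversal {V ι : Type*} [AddCommGroup V] [Module ℂ V] [Fintype ι] [DecidableEq ι]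
    (c c' : ι → Module.Dual ℂ V) (J : Finset ι)
    (hC : ∀ x : V, x ≠ 0 → (zeroSet c x).card < J.card) (x : ι → V)
    (hx : ∀ i ∈ J, ∀ k ∈ J, c' k (x i) = if k = i then 1 else 0) :
    ∃ π : Equiv.Perm J, ∀ i : J, c (π i) (x i) ≠ 0 := by
  let G : Matrix J J ℂ := Matrix.of fun r i => c r (x i)
  have hdet : G.det ≠ 0 := by
    intro h0
    obtain ⟨a, ha0, ha⟩ := Matrix.exists_mulVec_eq_zero_iff.2 h0
    apply ha0
    have hv : ∑ i : J, a i • x i = 0 := by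
      by_contra hne
      apply absurd (hC _ hne)
      rw [not_lt]
      apply Finset.card_le_card
      intro r hr
      rw [mem_zeroSet, map_sum]
      have := congrFun ha ⟨r, hr⟩
      simpa [G, Matrix.mulVec, dotProduct, mul_comm] using this
    funext k
    have h1 : c' k (∑ i : J, a i • x i) = a k := by
      rw [map_sum]
      simp only [map_smul, smul_eq_mul]
      rw [Finset.sum_congr rfl fun i _ => by rw [hx i i.2 k k.2]]
      simp
    rw [← h1, hv, map_zero, Pi.zero_apply]
  rw [Matrix.det_apply] at hdet
  obtain ⟨π, -, hπ⟩ := Finset.exists_ne_zero_of_sum_ne_zero hdet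
  refine ⟨π, fun i => ?_⟩
  have h2 : ∏ i, G (π i) i ≠ 0 := fun h => hπ (by rw [h, smul_zero])
  exact Finset.prod_ne_zero_iff.1 h2 i (Finset.mem_univ _)

/-- Let `J` be a set of `n` heaviest indices. The `c' i`, `i ∈ J`, have a dual basis `x i`, and each
`x i` is killed by exactly `n - 1` of the `c q`, whose weights have the same sum as those of
`J \ {i}`. The transversal `π` first yields `L (π i) ≤ L i`, and summing over `J` turns this into
equality, which leaves no slack in the counting inequality `hK`. -/
theorem top_structure {V ι : Type*} [AddCommGroup V] [Module ℂ V] [FiniteDimensional ℂ V]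
    [Fintype ι] [DecidableEq ι] (L : ι → ℕ) (c c' : ι → Module.Dual ℂ V)
    {n : ℕ} (hn : Module.finrank ℂ V = n) (hn2 : 2 ≤ n)
    (hC : ∀ x : V, x ≠ 0 → (zeroSet c x).card < n)
    (hK : ∀ (x : V) (N : Finset ι), zeroSet c x ⊆ N → n ≤ N.card + 2 →
      ∑ i ∈ zeroSet c' x, L i ≤ ∑ i ∈ N, L i)
    {J : Finset ι} {m : ℕ} (hJn : J.card = n) (hm : 1 ≤ m)
    (hJ : ∀ a ∈ J, m ≤ L a) (hJc : ∀ b, b ∉ J → L b ≤ m) :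
    ∃ (x : ι → V) (π : Equiv.Perm J),
      (∀ i ∈ J, ∀ k ∈ J, c' k (x i) = if k = i then 1 else 0) ∧
      (∀ v, v = ∑ i ∈ J, c' i v • x i) ∧
      ∀ i : J, L (π i) = L i ∧ c (π i) (x i) ≠ 0 ∧ (zeroSet c (x i)).card + 1 = n ∧
        ∑ k ∈ zeroSet c (x i), L k + L i = ∑ k ∈ J, L k := by
  have hQ : n ≤ Fintype.card ι := by
    rw [← hJn]; exact Finset.card_le_univ J
  obtain ⟨x, hx, hxv⟩ := exists_dual_vectors J c' (hJn.trans hn.symm) (by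
    intro x hx
    by_contra hne
    have hlt := hC x hne
    obtain ⟨N, hN, -, hNc⟩ := Finset.exists_subsuperset_card_eq (n := n - 1)
      (Finset.subset_univ (zeroSet c x)) (by omega) (by rw [Finset.card_univ]; omega)
    have h1 := hK x N hN (by omega)
    have h2 : ∑ i ∈ J, L i ≤ ∑ i ∈ zeroSet c' x, L i :=
      Finset.sum_le_sum_of_subset fun j hj => mem_zeroSet.2 (hx j hj)
    have h3 := sum_le_of_isTop L hJ hJc (N := N) (by omega)
    have h4 : 1 * 1 ≤ (J.card - N.card) * m := Nat.mul_le_mul (by omega) hm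
    omega)
  obtain ⟨π, hπ⟩ := exists_transversal c c' J (by rwa [hJn]) x hx
  have hx0 : ∀ i : J, x i ≠ 0 := by
    intro i h0
    have := hx i i.2 i i.2
    simp [h0] at this
  -- the bound obtained from any padding of the zero set that avoids `π i`
  have hpad : ∀ (i : J) (N : Finset ι), zeroSet c (x i) ⊆ N → (π i : ι) ∉ N → n ≤ N.card + 2 →
      N.card < n →
      L (π i) + (n - (N.card + 1)) * m ≤ L i := by
    intro i N hN hiN h1 h2
    have h3 := hK (x i) N hN h1
    have h4 : ∑ k ∈ J.erase i, L k ≤ ∑ k ∈ zeroSet c' (x i), L k := by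
      apply Finset.sum_le_sum_of_subset
      intro k hk
      obtain ⟨hki, hk⟩ := Finset.mem_erase.1 hk
      rw [mem_zeroSet, hx i i.2 k hk, if_neg hki]
    have h5 := Finset.add_sum_erase J L i.2
    have h6 := sum_le_of_isTop L hJ hJc (N := insert (π i : ι) N)
      (by rw [Finset.card_insert_of_notMem hiN]; omega)
    rw [Finset.card_insert_of_notMem hiN, Finset.sum_insert hiN, hJn] at h6
    omega
  have hnot : ∀ i : J, (π i : ι) ∉ zeroSet c (x i) := fun i h => hπ i (mem_zeroSet.1 h)
  have hex : ∀ (i : J) (k : ℕ), (zeroSet c (x i)).card ≤ k → k < n →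
      ∃ N, zeroSet c (x i) ⊆ N ∧ (π i : ι) ∉ N ∧ N.card = k := by
    intro i k h1 h2
    obtain ⟨N, hN, hN', hNc⟩ := Finset.exists_subsuperset_card_eq (n := k)
      (s := zeroSet c (x i)) (t := Finset.univ.erase (π i : ι))
      (fun q hq => Finset.mem_erase.2 ⟨fun h => hnot i (h ▸ hq), Finset.mem_univ _⟩) h1
      (by rw [Finset.card_erase_of_mem (Finset.mem_univ _), Finset.card_univ]; omega)
    exact ⟨N, hN, fun h => (Finset.mem_erase.1 (hN' h)).1 rfl, hNc⟩
  have hle : ∀ i : J, L (π i) ≤ L i := by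
    intro i
    have hlt := hC _ (hx0 i)
    obtain ⟨N, hN, hiN, hNc⟩ := hex i (n - 1) (by omega) (by omega)
    have := hpad i N hN hiN (by omega) (by omega)
    omega
  have heq : ∀ i : J, L (π i) = L i := by
    have hs : ∑ i : J, L (π i) = ∑ i : J, L i := Equiv.sum_comp π fun i : J => L i
    intro i
    exact (Finset.sum_eq_sum_iff_of_le fun i _ => hle i).1 hs i (Finset.mem_univ _)
  refine ⟨x, π, hx, hxv, fun i => ⟨heq i, hπ i, ?_⟩⟩
  have hlt := hC _ (hx0 i)
  have hcard : (zeroSet c (x i)).card + 1 = n := by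
    by_contra hne
    obtain ⟨N, hN, hiN, hNc⟩ := hex i (n - 2) (by omega) (by omega)
    have h1 := hpad i N hN hiN (by omega) (by omega)
    have h2 : 1 * 1 ≤ (n - (N.card + 1)) * m := Nat.mul_le_mul (by omega) hm
    have := heq i
    omega
  refine ⟨hcard, ?_⟩
  have h3 := hK (x i) _ subset_rfl (by omega)
  have h4 : ∑ k ∈ J.erase i, L k ≤ ∑ k ∈ zeroSet c' (x i), L k := by
    apply Finset.sum_le_sum_of_subset
    intro k hk
    obtain ⟨hki, hk⟩ := Finset.mem_erase.1 hk
    rw [mem_zeroSet, hx i i.2 k hk, if_neg hki]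
  have h5 := Finset.add_sum_erase J L i.2
  have h6 := sum_le_of_isTop L hJ hJc (N := insert (π i : ι) (zeroSet c (x i)))
    (by rw [Finset.card_insert_of_notMem (hnot i)]; omega)
  rw [Finset.card_insert_of_notMem (hnot i), Finset.sum_insert (hnot i), hJn] at h6
  have := heq i
  omega

/-! ### A matched pair of coefficients -/

/-- Sets of more than `k` elements, one for each index in `R`, inside a set of `R.card + k`
elements, whose pairwise intersections lie in `D`, can only exist if `D` has at least `k` elements:
otherwise the disjoint differences with `D` do not fit. -/
theorem card_lower_bound {ι : Type*} [DecidableEq ι] {W R D : Finset ι} (F : ι → Finset ι) {k : ℕ}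
    (hF : ∀ i ∈ R, k + 1 ≤ (F i).card) (hFW : ∀ i ∈ R, F i ⊆ W) (hDW : D ⊆ W)
    (hFD : ∀ i ∈ R, ∀ j ∈ R, i ≠ j → F i ∩ F j ⊆ D)
    (hR : 2 ≤ R.card) (hW : W.card = R.card + k) : k ≤ D.card := by
  have hdisj : (R : Set ι).PairwiseDisjoint fun i => F i \ D := by
    intro i hi j hj hij
    rw [Function.onFun, Finset.disjoint_left]
    intro q hq hq'
    rw [Finset.mem_sdiff] at hq hq'
    exact hq.2 (hFD i hi j hj hij (Finset.mem_inter.2 ⟨hq.1, hq'.1⟩))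
  have h1 : (R.biUnion fun i => F i \ D).card ≤ (W \ D).card := by
    apply Finset.card_le_card
    intro q hq
    obtain ⟨i, hi, hq⟩ := Finset.mem_biUnion.1 hq
    rw [Finset.mem_sdiff] at hq ⊢
    exact ⟨hFW i hi hq.1, hq.2⟩
  rw [Finset.card_biUnion hdisj, Finset.card_sdiff_of_subset hDW] at h1
  have h2 : R.card * (k + 1 - D.card) ≤ ∑ i ∈ R, (F i \ D).card := by
    rw [← smul_eq_mul]
    refine Finset.card_nsmul_le_sum _ _ _ fun i hi => ?_
    have := Finset.le_card_sdiff D (F i)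
    have := hF i hi
    omega
  by_contra hlt
  obtain ⟨a, ha⟩ : ∃ a, k = D.card + 1 + a := ⟨k - D.card - 1, by omega⟩
  have h3 : k + 1 - D.card = a + 2 := by omega
  rw [h3] at h2
  have h4 : W.card - D.card = R.card + 1 + a := by omega
  rw [h4] at h1
  nlinarith

/-- The case where the set `W` of indices of maximal weight has at least `n` elements. For `N ⊆ W`
with fewer than `n` elements, at least `N.card` of the `c q`, `q ∈ W`, lie in the span of the `c' i`,
`i ∈ N`. This is shown by descending induction on `N.card`, starting from the dual basis for
`N.card = n - 1`, and is used for a singleton `N`. -/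
theorem exists_matched_pair_of_many {V ι : Type*} [AddCommGroup V] [Module ℂ V]
    [FiniteDimensional ℂ V] [Fintype ι] [DecidableEq ι] (L : ι → ℕ) (hL : ∀ i, 1 ≤ L i)
    (c c' : ι → Module.Dual ℂ V)
    {n : ℕ} (hn : Module.finrank ℂ V = n) (hn2 : 2 ≤ n)
    (hC : ∀ x : V, x ≠ 0 → (zeroSet c x).card < n)
    (hK : ∀ (x : V) (N : Finset ι), zeroSet c x ⊆ N → n ≤ N.card + 2 →
      ∑ i ∈ zeroSet c' x, L i ≤ ∑ i ∈ N, L i)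
    {l : ℕ} {W : Finset ι} (hmax : ∀ i, L i ≤ l) (hW : ∀ i, i ∈ W ↔ L i = l)
    (hWn : n ≤ W.card) :
    ∃ j q, L j = L q ∧ ∀ x, c' j x = 0 → c q x = 0 := by
  classical
  have hWne : W.Nonempty := Finset.card_pos.1 (by omega)
  have hl : 1 ≤ l := by
    obtain ⟨i, hi⟩ := hWne
    rw [← (hW i).1 hi]; exact hL i
  have hstruct : ∀ J ⊆ W, J.card = n → ∃ x : ι → V,
      (∀ i ∈ J, ∀ k ∈ J, c' k (x i) = if k = i then 1 else 0) ∧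
      (∀ v, v = ∑ i ∈ J, c' i v • x i) ∧
      ∀ i ∈ J, (zeroSet c (x i)).card + 1 = n ∧ zeroSet c (x i) ⊆ W := by
    intro J hJW hJn
    obtain ⟨x, π, h1, h2, h3⟩ := top_structure L c c' hn hn2 hC hK hJn hl
      (fun a ha => ((hW a).1 (hJW ha)).ge) (fun b _ => hmax b)
    refine ⟨x, h1, h2, fun i hi => ?_⟩
    obtain ⟨-, -, h4, h5⟩ := h3 ⟨i, hi⟩
    refine ⟨h4, ?_⟩
    have h6 : ∑ k ∈ J, L k = n * l := by
      rw [Finset.sum_congr rfl fun k hk => (hW k).1 (hJW hk), Finset.sum_const, hJn, smul_eq_mul]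
    have h7 : ∑ k ∈ zeroSet c (x i), L k = ∑ k ∈ zeroSet c (x i), l := by
      rw [Finset.sum_const, smul_eq_mul]
      have : L i = l := (hW i).1 (hJW hi)
      dsimp only at h4 h5
      rw [h6, ← h4, this, add_mul] at h5
      omega
    intro k hk
    exact (hW k).2 ((Finset.sum_eq_sum_iff_of_le fun i _ => hmax i).1 h7 k hk)
  -- indices in `W` whose functional lies in the span of the `c' i`, `i ∈ N`
  let D : Finset ι → Finset ι := fun N =>
    W.filter fun q => ∀ x, (∀ i ∈ N, c' i x = 0) → c q x = 0
  have hdesc : ∀ d k : ℕ, k + d + 1 = n → ∀ N ⊆ W, N.card = k → k ≤ (D N).card := by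
    intro d
    induction d with
    | zero =>
      intro k hk N hNW hNk
      obtain ⟨J, hNJ, hJW, hJn⟩ := Finset.exists_subsuperset_card_eq (n := n) hNW
        (by omega) hWn
      obtain ⟨x, h1, h2, h3⟩ := hstruct J hJW hJn
      obtain ⟨i, hiJ, hiN⟩ := Finset.exists_mem_notMem_of_card_lt_card (s := N) (t := J) (by omega)
      have hJe : J = insert i N := (Finset.eq_of_subset_of_card_le
        (Finset.insert_subset hiJ hNJ)
        (by rw [Finset.card_insert_of_notMem hiN]; omega)).symm
      obtain ⟨h4, h5⟩ := h3 i hiJ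
      have : zeroSet c (x i) ⊆ D N := by
        intro q hq
        refine Finset.mem_filter.2 ⟨h5 hq, fun v hv => ?_⟩
        rw [h2 v, hJe, Finset.sum_insert hiN,
          Finset.sum_eq_zero (s := N) fun k hk => by rw [hv k hk, zero_smul], add_zero, map_smul,
          mem_zeroSet.1 hq, smul_zero]
      have := Finset.card_le_card this
      omega
    | succ d ih =>
      intro k hk N hNW hNk
      have hRc : (W \ N).card = W.card - N.card := Finset.card_sdiff_of_subset hNW
      refine card_lower_bound (W := W) (R := W \ N) (D := D N) (fun i => D (insert i N))
        ?_ (fun _ _ => Finset.filter_subset _ _) (Finset.filter_subset _ _) ?_ (by omega) (by omega)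
      · intro i hi
        rw [Finset.mem_sdiff] at hi
        exact ih (k + 1) (by omega) _ (Finset.insert_subset hi.1 hNW)
          (by rw [Finset.card_insert_of_notMem hi.2, hNk])
      · intro i hi j hj hij q hq
        rw [Finset.mem_sdiff] at hi hj
        rw [Finset.mem_inter, Finset.mem_filter, Finset.mem_filter] at hq
        refine Finset.mem_filter.2 ⟨hq.1.1, fun v hv => ?_⟩
        obtain ⟨J, hNJ, hJW, hJn⟩ := Finset.exists_subsuperset_card_eq (n := n)
          (s := insert i (insert j N)) (t := W)
          (Finset.insert_subset hi.1 (Finset.insert_subset hj.1 hNW))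
          (by
            have := Finset.card_insert_le i (insert j N)
            have := Finset.card_insert_le j N
            omega) hWn
        obtain ⟨x, h1, -, -⟩ := hstruct J hJW hJn
        have hiJ : i ∈ J := hNJ (by simp)
        have hjJ : j ∈ J := hNJ (by simp)
        have hkJ : ∀ k ∈ N, k ∈ J := fun k hk => hNJ (by simp [hk])
        -- `v` is the sum of a vector killed by `c' j` and one killed by `c' i`
        have e1 : c q (x j) = 0 := by
          apply hq.1.2
          intro k hk
          rcases Finset.mem_insert.1 hk with rfl | hk
          · rw [h1 j hjJ k hiJ, if_neg hij]
          · rw [h1 j hjJ k (hkJ k hk), if_neg (ne_of_mem_of_not_mem hk hj.2)]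
        have e2 : c q (v - c' j v • x j) = 0 := by
          apply hq.2.2
          intro k hk
          rw [map_sub, map_smul, smul_eq_mul]
          rcases Finset.mem_insert.1 hk with rfl | hk
          · rw [h1 k hjJ k hjJ, if_pos rfl, mul_one, sub_self]
          · rw [h1 j hjJ k (hkJ k hk), if_neg (ne_of_mem_of_not_mem hk hj.2), hv k hk]
            simp
        rw [map_sub, map_smul, e1, smul_zero, sub_zero] at e2
        exact e2
  obtain ⟨j, hj⟩ := hWne
  have h1 := hdesc (n - 2) 1 (by omega) {j} (by simpa using hj) (by simp)
  obtain ⟨q, hq⟩ := Finset.card_pos.1 (show 0 < (D {j}).card by omega)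
  obtain ⟨hqW, hq⟩ := Finset.mem_filter.1 hq
  exact ⟨j, q, by rw [(hW j).1 hj, (hW q).1 hqW], fun x hx => hq x (by simpa using hx)⟩

/-- The case of fewer than `n` indices of maximal weight. For a set `J` of `n` heaviest indices, the
set of `π i` and the zeros of `c · (x i)` has `n` elements and the weight of `J`, so by exchange it
contains all indices of maximal weight. Hence, for `j` of maximal weight, `c (π j)` vanishes at every
`x i` with `i ≠ j`, that is, on the kernel of `c' j`. -/
theorem exists_matched_pair_of_few {V ι : Type*} [AddCommGroup V] [Module ℂ V]
    [FiniteDimensional ℂ V] [Fintype ι] [DecidableEq ι] (L : ι → ℕ) (hL : ∀ i, 1 ≤ L i)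
    (c c' : ι → Module.Dual ℂ V)
    {n : ℕ} (hn : Module.finrank ℂ V = n) (hn2 : 2 ≤ n) (hnQ : n ≤ Fintype.card ι)
    (hC : ∀ x : V, x ≠ 0 → (zeroSet c x).card < n)
    (hK : ∀ (x : V) (N : Finset ι), zeroSet c x ⊆ N → n ≤ N.card + 2 →
      ∑ i ∈ zeroSet c' x, L i ≤ ∑ i ∈ N, L i)
    {l : ℕ} {W : Finset ι} (hmax : ∀ i, L i ≤ l) (hW : ∀ i, i ∈ W ↔ L i = l)
    (hWne : W.Nonempty) (hWn : W.card < n) :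
    ∃ j q, L j = L q ∧ ∀ x, c' j x = 0 → c q x = 0 := by
  obtain ⟨J, m, hJn, hm, hJ, hJc⟩ := exists_isTop L hL n hnQ
  have hWJ : W ⊆ J := by
    intro b hb
    by_contra hbJ
    have h1 := hJc b hbJ
    rw [(hW b).1 hb] at h1
    have : J ⊆ W := fun a ha => (hW a).2 (le_antisymm (hmax a) (h1.trans (hJ a ha)))
    have := Finset.card_le_card this
    omega
  obtain ⟨x, π, h1, h2, h3⟩ := top_structure L c c' hn hn2 hC hK hJn hm hJ hJc
  -- exchanging a lighter element of `X` for a missing `a ∈ W` would exceed the weight of `J`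
  have hX : ∀ i : J, ∀ a ∈ W, a ∉ zeroSet c (x i) → a = π i := by
    intro i a ha haZ
    by_contra hne
    obtain ⟨h4, h5, h6, h7⟩ := h3 i
    have hnot : (π i : ι) ∉ zeroSet c (x i) := fun h => h5 (mem_zeroSet.1 h)
    have haX : a ∉ insert (π i : ι) (zeroSet c (x i)) := by simp [hne, haZ]
    have hXc := Finset.card_insert_of_notMem hnot
    have hXs := Finset.sum_insert (f := L) hnot
    set X := insert (π i : ι) (zeroSet c (x i))
    obtain ⟨b, hbX, hbW⟩ := Finset.exists_mem_notMem_of_card_lt_card (s := W) (t := X) (by omega)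
    have hb : L b < l := lt_of_le_of_ne (hmax b) fun h => hbW ((hW b).2 h)
    have haE : a ∉ X.erase b := fun h => haX (Finset.mem_of_mem_erase h)
    have h8 := sum_le_of_isTop L hJ hJc (N := insert a (X.erase b))
      (by rw [Finset.card_insert_of_notMem haE, Finset.card_erase_of_mem hbX]; omega)
    rw [Finset.sum_insert haE, (hW a).1 ha] at h8
    have h9 := Finset.add_sum_erase X L hbX
    omega
  obtain ⟨j, hj⟩ := hWne
  let j' : J := ⟨j, hWJ hj⟩
  obtain ⟨h4, h5, -, -⟩ := h3 j'
  have hπW : (π j' : ι) ∈ W := (hW _).2 (h4.trans ((hW j).1 hj))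
  refine ⟨j, π j', h4.symm, fun v hv => ?_⟩
  rw [h2 v, map_sum]
  refine Finset.sum_eq_zero fun i hi => ?_
  rw [map_smul]
  by_cases hij : i = j
  · rw [hij, hv, zero_smul]
  · by_cases hz : (π j' : ι) ∈ zeroSet c (x i)
    · rw [mem_zeroSet.1 hz, smul_zero]
    · have := hX ⟨i, hi⟩ _ hπW hz
      have := π.injective (Subtype.coe_injective this)
      exact absurd (congrArg Subtype.val this).symm hij

/-- Under the counting inequality `hK`, some `c' j` and `c q` with `L j = L q` are proportional,
stated here as an inclusion of kernels. -/
theorem exists_matched_pair {V ι : Type*} [AddCommGroup V] [Module ℂ V]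
    [FiniteDimensional ℂ V] [Fintype ι] [DecidableEq ι] (L : ι → ℕ) (hL : ∀ i, 1 ≤ L i)
    (c c' : ι → Module.Dual ℂ V)
    {n : ℕ} (hn : Module.finrank ℂ V = n) (hn2 : 2 ≤ n) (hnQ : n ≤ Fintype.card ι)
    (hC : ∀ x : V, x ≠ 0 → (zeroSet c x).card < n)
    (hK : ∀ (x : V) (N : Finset ι), zeroSet c x ⊆ N → n ≤ N.card + 2 →
      ∑ i ∈ zeroSet c' x, L i ≤ ∑ i ∈ N, L i) :
    ∃ j q, L j = L q ∧ ∀ x, c' j x = 0 → c q x = 0 := by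
  have hne : (Finset.univ : Finset ι).Nonempty := by
    rw [← Finset.card_pos, Finset.card_univ]; omega
  obtain ⟨a, -, ha⟩ := Finset.exists_max_image Finset.univ L hne
  have hmax : ∀ i, L i ≤ L a := fun i => ha i (Finset.mem_univ i)
  have hW : ∀ i, i ∈ Finset.univ.filter (fun i => L i = L a) ↔ L i = L a := by simp
  by_cases hWn : n ≤ (Finset.univ.filter fun i => L i = L a).card
  · exact exists_matched_pair_of_many L hL c c' hn hn2 hC hK hmax hW hWn
  · exact exists_matched_pair_of_few L hL c c' hn hn2 hnQ hC hK hmax hW ⟨a, (hW a).2 rfl⟩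
      (not_le.1 hWn)

theorem ne_zero_of_card_zeroSet_lt {V ι : Type*} [AddCommGroup V] [Module ℂ V]
    [FiniteDimensional ℂ V] [Fintype ι] [DecidableEq ι] (c : ι → Module.Dual ℂ V)
    {n : ℕ} (hn : Module.finrank ℂ V = n) (hn1 : 1 ≤ n) (hnQ : n ≤ Fintype.card ι)
    (hC : ∀ x : V, x ≠ 0 → (zeroSet c x).card < n) (q : ι) : c q ≠ 0 := by
  intro h0
  obtain ⟨N, hN, -, hNc⟩ := Finset.exists_subsuperset_card_eq (n := n)
    (Finset.subset_univ ({q} : Finset ι)) (by simpa using hn1) (by rwa [Finset.card_univ])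
  have hq : q ∈ N := hN (by simp)
  obtain ⟨x, hx0, hx⟩ := exists_ne_zero_of_card_lt (N.erase q) c
    (by rw [Finset.card_erase_of_mem hq]; omega)
  have h1 : N ⊆ zeroSet c x := by
    intro k hk
    rw [mem_zeroSet]
    by_cases hkq : k = q
    · rw [hkq, h0, LinearMap.zero_apply]
    · exact hx k (Finset.mem_erase.2 ⟨hkq, hk⟩)
  have := Finset.card_le_card h1
  have := hC x hx0
  omega

theorem exists_smul_of_ker_le {V : Type*} [AddCommGroup V] [Module ℂ V]
    (f g : Module.Dual ℂ V) (hg : g ≠ 0) (h : ∀ x, f x = 0 → g x = 0) :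
    ∃ k : ℂ, k ≠ 0 ∧ f = k • g := by
  obtain ⟨x, hx⟩ : ∃ x, g x ≠ 0 := by
    by_contra hcon
    push Not at hcon
    exact hg (LinearMap.ext hcon)
  have hfx : f x ≠ 0 := fun h0 => hx (h x h0)
  refine ⟨f x / g x, div_ne_zero hfx hx, LinearMap.ext fun y => ?_⟩
  have h1 := h (y - (f y / f x) • x) (by
    rw [map_sub, map_smul, smul_eq_mul]; field_simp; ring)
  rw [map_sub, map_smul, smul_eq_mul, sub_eq_zero] at h1
  rw [LinearMap.smul_apply, smul_eq_mul, h1]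
  field_simp

/-! ### Rank comparison and the planar case -/

theorem finrank_finset_sup_le {ι W : Type*} [AddCommGroup W] [Module ℂ W] [FiniteDimensional ℂ W]
    (R : ι → Submodule ℂ W) (L : ι → ℕ) (hR : ∀ i, Module.finrank ℂ (R i) ≤ L i) (s : Finset ι) :
    Module.finrank ℂ (s.sup R : Submodule ℂ W) ≤ ∑ i ∈ s, L i := by
  classical
  induction s using Finset.induction_on with
  | empty => simp
  | insert a s ha ih =>
    rw [Finset.sup_insert, Finset.sum_insert ha]
    exact (Submodule.finrank_add_le_finrank_add_finrank _ _).trans (add_le_add (hR a) ih)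

theorem range_sum_smul_le {ι W₁ W₂ : Type*} [Fintype ι] [AddCommGroup W₁] [Module ℂ W₁]
    [AddCommGroup W₂] [Module ℂ W₂] (G : ι → W₁ →ₗ[ℂ] W₂) (y : ι → ℂ) (s : Finset ι)
    (hs : ∀ i, i ∉ s → y i = 0) :
    LinearMap.range (∑ i, y i • G i) ≤ s.sup fun i => LinearMap.range (G i) := by
  rintro _ ⟨w, rfl⟩
  rw [LinearMap.sum_apply]
  refine Submodule.sum_mem _ fun i _ => ?_
  rw [LinearMap.smul_apply]
  by_cases hi : i ∈ s
  · exact Submodule.smul_mem _ _ (Finset.le_sup (f := fun i => LinearMap.range (G i)) hi ⟨w, rfl⟩)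
  · rw [hs i hi, zero_smul]
    exact Submodule.zero_mem _

/-- Two families with the same pencil over a plane `V`, with pairwise independent coefficients
`c i`, coincide if the ranges of the `E i` are in direct sum of maximal dimension. Evaluating at a
zero of `c j` shows that the range of `G q` has no component in the range of `E j`, `j ≠ q`. -/
theorem eq_of_direct {ι V W₁ W₂ : Type*} [Fintype ι] [DecidableEq ι]
    [AddCommGroup V] [Module ℂ V] [FiniteDimensional ℂ V]
    [AddCommGroup W₁] [Module ℂ W₁]
    [AddCommGroup W₂] [Module ℂ W₂] [FiniteDimensional ℂ W₂]
    (hV : Module.finrank ℂ V = 2) (hQ : 2 ≤ Fintype.card ι) (L : ι → ℕ)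
    (E G : ι → W₁ →ₗ[ℂ] W₂) (c : ι → Module.Dual ℂ V)
    (hE : ∀ i, Module.finrank ℂ (LinearMap.range (E i)) ≤ L i)
    (hG : ∀ i, Module.finrank ℂ (LinearMap.range (G i)) ≤ L i)
    (h1 : ∀ (y : ι → ℂ) (T : Finset ι), (∀ i ∈ T, y i ≠ 0) →
      ∑ i ∈ T, L i ≤ Module.finrank ℂ (LinearMap.range (∑ i, y i • E i)))
    (hC : ∀ x : V, x ≠ 0 → (zeroSet c x).card < 2)
    (h3 : ∀ x, ∑ i, c i x • E i = ∑ i, c i x • G i) : E = G := by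
  let R : ι → Submodule ℂ W₂ := fun i => LinearMap.range (E i)
  -- summation of components; it is injective because the ranges are in direct sum
  let S : (∀ i, R i) →ₗ[ℂ] W₂ := ∑ i, (R i).subtype ∘ₗ LinearMap.proj i
  have hSapp : ∀ u, S u = ∑ i, (u i : W₂) := by
    intro u
    simp [S, LinearMap.sum_apply]
  have hS : Function.Injective S := by
    rw [← LinearMap.ker_eq_bot, ← Submodule.finrank_eq_zero]
    have e1 := LinearMap.finrank_range_add_finrank_ker S
    rw [Module.finrank_pi_fintype] at e1
    have e2 : ∑ i, Module.finrank ℂ (R i) ≤ ∑ i, L i := Finset.sum_le_sum fun i _ => hE i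
    have e3 := h1 (fun _ => 1) Finset.univ (by simp)
    have e4 : LinearMap.range (∑ i, (1 : ℂ) • E i) ≤ LinearMap.range S := by
      rintro _ ⟨w, rfl⟩
      refine ⟨fun i => ⟨E i w, w, rfl⟩, ?_⟩
      simp [hSapp, LinearMap.sum_apply]
    have e5 := Submodule.finrank_mono e4
    omega
  -- a vector on the kernel line of `c j`
  have hx : ∀ j, ∃ x : V, c j x = 0 ∧ ∀ i, i ≠ j → c i x ≠ 0 := by
    intro j
    obtain ⟨x, hx0, hx⟩ := exists_ne_zero_of_card_lt {j} c (by simp [hV])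
    refine ⟨x, hx j (by simp), fun i hij h0 => ?_⟩
    have : ({i, j} : Finset ι) ⊆ zeroSet c x := by
      intro k hk
      rw [mem_zeroSet]
      rcases Finset.mem_insert.1 hk with rfl | hk
      · exact h0
      · exact hx k hk
    have := Finset.card_le_card this
    rw [Finset.card_pair hij] at this
    have := hC x hx0
    omega
  have hother : ∀ q : ι, ∃ j, j ≠ q := by
    intro q
    have : Nontrivial ι := Fintype.one_lt_card_iff_nontrivial.1 (by omega)
    exact exists_ne q
  -- `G q w` is a sum of vectors of the `R i` without component in `R j`
  have hmiss : ∀ q j, j ≠ q → ∀ w, ∃ u : ∀ i, R i, u j = 0 ∧ S u = G q w := by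
    intro q j hjq w
    obtain ⟨x, hxj, hxi⟩ := hx j
    have e1 := h1 (fun i => c i x) (Finset.univ.erase j)
      fun i hi => hxi i (Finset.ne_of_mem_erase hi)
    have e2 := range_sum_smul_le G (fun i => c i x) (Finset.univ.erase j) (by
      intro i hi
      have : i = j := by simpa using hi
      rw [this, hxj])
    have e3 := finrank_finset_sup_le (fun i => LinearMap.range (G i)) L hG (Finset.univ.erase j)
    rw [h3 x] at e1
    have e4 := Submodule.eq_of_le_of_finrank_le e2 (e3.trans e1)
    have e5 : G q w ∈ LinearMap.range (∑ i, c i x • G i) := by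
      rw [e4]
      exact Finset.le_sup (f := fun i => LinearMap.range (G i))
        (Finset.mem_erase.2 ⟨hjq.symm, Finset.mem_univ q⟩) ⟨w, rfl⟩
    rw [← h3 x] at e5
    obtain ⟨z, hz⟩ := e5
    refine ⟨fun i => c i x • ⟨E i z, z, rfl⟩, by simp [hxj], ?_⟩
    rw [hSapp, ← hz, LinearMap.sum_apply]
    rfl
  have hGR : ∀ q w, G q w ∈ R q := by
    intro q w
    obtain ⟨j, hj⟩ := hother q
    obtain ⟨u, -, hu⟩ := hmiss q j hj w
    have : ∀ k, k ≠ q → u k = 0 := by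
      intro k hk
      obtain ⟨u', hu0, hu'⟩ := hmiss q k hk w
      rw [hS (hu.trans hu'.symm), hu0]
    rw [← hu, hSapp, Finset.sum_eq_single q (fun k _ hk => by rw [this k hk]; rfl) (by simp)]
    exact (u q).2
  funext q
  ext w
  obtain ⟨j, hj⟩ := hother q
  obtain ⟨x, -, hxi⟩ := hx j
  let u : ∀ i, R i := fun i => c i x • (⟨E i w, w, rfl⟩ - ⟨G i w, hGR i w⟩)
  have hu : u = 0 := by
    apply hS
    rw [map_zero, hSapp]
    have := congrArg (fun f => f w) (h3 x)
    simp only [LinearMap.sum_apply, LinearMap.smul_apply] at this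
    simp [u, smul_sub, this]
  have h4 := congrArg Subtype.val (congrFun hu q)
  have h5 : c q x • (E q w - G q w) = 0 := h4
  exact sub_eq_zero.1 ((smul_eq_zero.1 h5).resolve_left (hxi q hj.symm))

/-- The counting inequality: the common value of the two pencils at `x` has rank at least the weight
of the complement of `N` and at most the weight of the indices with `c' i x ≠ 0`. -/
theorem zeroSet_sum_le {ι V W₁ W₂ : Type*} [Fintype ι] [DecidableEq ι]
    [AddCommGroup V] [Module ℂ V]
    [AddCommGroup W₁] [Module ℂ W₁]
    [AddCommGroup W₂] [Module ℂ W₂] [FiniteDimensional ℂ W₂] {n t : ℕ}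
    (hnt : n + t = Fintype.card ι + 2) (L : ι → ℕ)
    (E E' : ι → W₁ →ₗ[ℂ] W₂) (c c' : ι → Module.Dual ℂ V)
    (hE' : ∀ i, Module.finrank ℂ (LinearMap.range (E' i)) ≤ L i)
    (h1 : ∀ (y : ι → ℂ) (T : Finset ι), (∀ i ∈ T, y i ≠ 0) → T.card ≤ t →
      ∑ i ∈ T, L i ≤ Module.finrank ℂ (LinearMap.range (∑ i, y i • E i)))
    (h3 : ∀ x, ∑ i, c i x • E i = ∑ i, c' i x • E' i)
    (x : V) (N : Finset ι) (hN : zeroSet c x ⊆ N) (hNn : n ≤ N.card + 2) :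
    ∑ i ∈ zeroSet c' x, L i ≤ ∑ i ∈ N, L i := by
  have e1 := h1 (fun i => c i x) Nᶜ
    (fun i hi h0 => Finset.mem_compl.1 hi (hN (mem_zeroSet.2 h0)))
    (by
      have := Finset.card_add_card_compl N
      omega)
  rw [h3 x] at e1
  have e2 := Submodule.finrank_mono (range_sum_smul_le E' (fun i => c' i x) (zeroSet c' x)ᶜ (by
    intro i hi
    rw [Finset.mem_compl, not_not] at hi
    exact mem_zeroSet.1 hi))
  have e3 := finrank_finset_sup_le (fun i => LinearMap.range (E' i)) L hE' (zeroSet c' x)ᶜ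
  have e4 := Finset.sum_add_sum_compl N L
  have e5 := Finset.sum_add_sum_compl (zeroSet c' x) L
  omega

/-- On a plane, the kernel line of each `c' i` is the kernel line of exactly one `c q`. The indices
`i` sent to a given `q` have total weight at most `L q`; summing over `q` shows that this assignment
is a weight-preserving bijection. -/
theorem exists_perm_of_plane {ι V : Type*} [Fintype ι] [DecidableEq ι]
    [AddCommGroup V] [Module ℂ V] [FiniteDimensional ℂ V]
    (hV : Module.finrank ℂ V = 2) (hQ : 2 ≤ Fintype.card ι) (L : ι → ℕ) (hL : ∀ i, 1 ≤ L i)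
    (c c' : ι → Module.Dual ℂ V)
    (hC : ∀ x : V, x ≠ 0 → (zeroSet c x).card < 2)
    (hK : ∀ x : V, ∑ i ∈ zeroSet c' x, L i ≤ ∑ i ∈ zeroSet c x, L i) :
    ∃ σ : Equiv.Perm ι, (∀ i, L (σ i) = L i) ∧ ∀ i, ∃ k : ℂ, k ≠ 0 ∧ c' i = k • c (σ i) := by
  have hx : ∀ i, ∃ x : V, x ≠ 0 ∧ c' i x = 0 := by
    intro i
    obtain ⟨x, hx0, hx⟩ := exists_ne_zero_of_card_lt {i} c' (by simp [hV])
    exact ⟨x, hx0, hx i (by simp)⟩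
  choose x hx0 hx using hx
  have hf : ∀ i, ∃ q, zeroSet c (x i) = {q} := by
    intro i
    rw [← Finset.card_eq_one]
    have e1 := hC _ (hx0 i)
    have e2 : (zeroSet c (x i)).Nonempty := by
      rw [Finset.nonempty_iff_ne_empty]
      intro h0
      have e3 := hK (x i)
      rw [h0, Finset.sum_empty] at e3
      have e4 := Finset.single_le_sum (f := L) (fun i _ => Nat.zero_le _)
        (mem_zeroSet.2 (hx i) : i ∈ zeroSet c' (x i))
      have := hL i
      omega
    have := Finset.card_pos.2 e2
    omega
  choose f hf using hf
  have hfx : ∀ i, c (f i) (x i) = 0 := fun i => mem_zeroSet.1 (by rw [hf i]; simp)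
  have hc0 := ne_zero_of_card_zeroSet_lt c hV (by omega) hQ hC
  -- `x i` spans the kernel of `c (f i)`
  have hline : ∀ i v, c (f i) v = 0 → ∃ a : ℂ, v = a • x i := by
    intro i v hv
    have e1 := Module.Dual.finrank_ker_add_one_of_ne_zero (hc0 (f i))
    have e2 : Module.finrank ℂ (LinearMap.ker (c (f i))) = 1 := by omega
    obtain ⟨a, ha⟩ := (finrank_eq_one_iff_of_nonzero' (⟨x i, hfx i⟩ : LinearMap.ker (c (f i)))
      (by simpa [Subtype.ext_iff] using hx0 i)).1 e2 ⟨v, hv⟩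
    exact ⟨a, (congrArg Subtype.val ha).symm⟩
  have hfib : ∀ q ∈ Finset.univ.image f, ∑ i ∈ Finset.univ.filter (fun i => f i = q), L i ≤ L q := by
    intro q hq
    obtain ⟨i, -, rfl⟩ := Finset.mem_image.1 hq
    have e1 := hK (x i)
    rw [hf i, Finset.sum_singleton] at e1
    refine (Finset.sum_le_sum_of_subset ?_).trans e1
    intro k hk
    have hk : f k = f i := by simpa using hk
    obtain ⟨a, ha⟩ := hline k (x i) (by rw [hk]; exact hfx i)
    rw [mem_zeroSet, ha, map_smul, hx k, smul_zero]
  have htot : ∑ i, L i = ∑ q ∈ Finset.univ.image f,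
      ∑ i ∈ Finset.univ.filter (fun i => f i = q), L i :=
    (Finset.sum_fiberwise_of_maps_to (fun i _ => Finset.mem_image_of_mem f (Finset.mem_univ i)) L).symm
  have e1 := Finset.sum_le_sum hfib
  have himg : Finset.univ.image f = Finset.univ := by
    by_contra hne
    obtain ⟨q, hq⟩ : ∃ q, q ∉ Finset.univ.image f := by
      by_contra hcon
      push Not at hcon
      exact hne (Finset.eq_univ_of_forall hcon)
    have e2 := Finset.sum_le_sum_of_subset (f := L) (Finset.subset_univ (insert q (Finset.univ.image f)))
    rw [Finset.sum_insert hq] at e2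
    have := hL q
    omega
  have hsurj : Function.Surjective f := fun q => by
    have : q ∈ Finset.univ.image f := by rw [himg]; exact Finset.mem_univ q
    obtain ⟨i, -, hi⟩ := Finset.mem_image.1 this
    exact ⟨i, hi⟩
  have hbij : Function.Bijective f := Finite.injective_iff_bijective.1
    (Finite.injective_iff_surjective.2 hsurj)
  have hle : ∀ i, L i ≤ L (f i) := by
    intro i
    refine le_trans ?_ (hfib (f i) (Finset.mem_image_of_mem f (Finset.mem_univ i)))
    exact Finset.single_le_sum (f := L) (fun i _ => Nat.zero_le _) (by simp)
  have heq : ∀ i, L i = L (f i) := by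
    have hs : ∑ i, L i = ∑ i, L (f i) := (hbij.sum_comp L).symm
    intro i
    exact (Finset.sum_eq_sum_iff_of_le fun i _ => hle i).1 hs i (Finset.mem_univ _)
  refine ⟨Equiv.ofBijective f hbij, fun i => (heq i).symm, fun i => ?_⟩
  have hc'0 : c' i ≠ 0 := by
    intro h0
    have : Nontrivial ι := Fintype.one_lt_card_iff_nontrivial.1 (by omega)
    obtain ⟨k, hk⟩ := exists_ne i
    have e2 := hK (x k)
    rw [hf k, Finset.sum_singleton, ← heq k] at e2
    have e3 : ∑ a ∈ ({k, i} : Finset ι), L a ≤ ∑ a ∈ zeroSet c' (x k), L a := by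
      apply Finset.sum_le_sum_of_subset
      intro a ha
      rw [mem_zeroSet]
      rcases Finset.mem_insert.1 ha with rfl | ha
      · exact hx a
      · rw [Finset.mem_singleton.1 ha, h0, LinearMap.zero_apply]
    rw [Finset.sum_pair hk] at e3
    have := hL i
    omega
  obtain ⟨k, hk, hck⟩ := exists_smul_of_ker_le (c (f i)) (c' i) hc'0 (by
    intro v hv
    obtain ⟨a, ha⟩ := hline i v hv
    rw [ha, map_smul, hx i, smul_zero])
  refine ⟨k⁻¹, inv_ne_zero hk, ?_⟩
  rw [Equiv.ofBijective_apply, hck, smul_smul, inv_mul_cancel₀ hk, one_smul]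

/-! ### Uniqueness for pencils -/

theorem sum_subtype_ne {ι M : Type*} [Fintype ι] [DecidableEq ι] [AddCommMonoid M] (q : ι)
    (f : ι → M) : ∑ i, f i = f q + ∑ i : {i // i ≠ q}, f i := by
  rw [← Finset.add_sum_erase Finset.univ f (Finset.mem_univ q)]
  congr 1
  exact (Finset.sum_subtype (Finset.univ.erase q) (by simp) f)

/-- The uniqueness theorem for pencils: terms `E' i` of rank at most `L i` with the same pencil as
`E` over a space `V` of dimension `n` agree with the `E q` up to permutation and scaling. The
hypotheses on `E` and `c` are the rank bound for supports containing at most `t` chosen indices and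
the genericity of `V`. -/
theorem exists_perm_of_tensor_eq {W₁ W₂ : Type} [AddCommGroup W₁] [Module ℂ W₁]
    [AddCommGroup W₂] [Module ℂ W₂] [FiniteDimensional ℂ W₂] {t : ℕ} (ht : 2 ≤ t) (n : ℕ)
    (hn : 2 ≤ n) :
    ∀ {ι V : Type} [Fintype ι] [DecidableEq ι]
    [AddCommGroup V] [Module ℂ V] [FiniteDimensional ℂ V]
    (_ : Module.finrank ℂ V = n) (_ : n + t = Fintype.card ι + 2)
    (L : ι → ℕ) (_ : ∀ i, 1 ≤ L i)
    (E E' : ι → W₁ →ₗ[ℂ] W₂) (c c' : ι → Module.Dual ℂ V)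
    (_ : ∀ i, Module.finrank ℂ (LinearMap.range (E i)) ≤ L i)
    (_ : ∀ i, Module.finrank ℂ (LinearMap.range (E' i)) ≤ L i)
    (_ : ∀ (y : ι → ℂ) (T : Finset ι), (∀ i ∈ T, y i ≠ 0) → T.card ≤ t →
      ∑ i ∈ T, L i ≤ Module.finrank ℂ (LinearMap.range (∑ i, y i • E i)))
    (_ : ∀ x : V, x ≠ 0 → (zeroSet c x).card < n)
    (_ : ∀ x, ∑ i, c i x • E i = ∑ i, c' i x • E' i),
    ∃ σ : Equiv.Perm ι, (∀ i, L (σ i) = L i) ∧ ∀ i, ∃ k : ℂ, k ≠ 0 ∧ E' i = k • E (σ i) := by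
  induction n, hn using Nat.le_induction with
  | base =>
    intro ι V _ _ _ _ _ hV hcard L hL E E' c c' hE hE' h1 hC h3
    have hK := zeroSet_sum_le hcard L E E' c c' hE' h1 h3
    obtain ⟨σ, hσ, hc⟩ := exists_perm_of_plane hV (by omega) L hL c c' hC
      fun x => hK x _ subset_rfl (by omega)
    choose k hk hck using hc
    have hEG : E = fun q => k (σ.symm q) • E' (σ.symm q) := by
      refine eq_of_direct hV (by omega) L E _ c hE ?_ ?_ hC ?_
      · intro q
        rw [LinearMap.range_smul _ _ (hk _)]
        refine (hE' _).trans_eq ?_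
        rw [← hσ, Equiv.apply_symm_apply]
      · intro y T hT
        refine h1 y T hT ?_
        have := Finset.card_le_univ T
        omega
      · intro x
        rw [h3 x]
        refine Eq.trans ?_ (Equiv.sum_comp σ fun q => c q x • k (σ.symm q) • E' (σ.symm q))
        refine Finset.sum_congr rfl fun i _ => ?_
        rw [Equiv.symm_apply_apply, hck i, LinearMap.smul_apply, smul_eq_mul, smul_smul, mul_comm]
    refine ⟨σ, hσ, fun i => ⟨(k i)⁻¹, inv_ne_zero (hk i), ?_⟩⟩
    rw [hEG]
    simp only [Equiv.symm_apply_apply]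
    rw [smul_smul, inv_mul_cancel₀ (hk i), one_smul]
  | succ n hn ih =>
    intro ι V _ _ _ _ _ hV hcard L hL E E' c c' hE hE' h1 hC h3
    have hK := zeroSet_sum_le hcard L E E' c c' hE' h1 h3
    obtain ⟨j, q, hjq, hker⟩ := exists_matched_pair L hL c c' hV (by omega) (by omega) hC hK
    have hcq := ne_zero_of_card_zeroSet_lt c hV (by omega) (by omega) hC q
    obtain ⟨κ, hκ, hcκ⟩ := exists_smul_of_ker_le _ _ hcq hker
    -- relabel the alternative terms so that the matched pair carries the same index `q`
    let s : Equiv.Perm ι := Equiv.swap j q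
    have hLs : ∀ i, L (s i) = L i := by
      intro i
      by_cases hi : i = j
      · rw [hi, Equiv.swap_apply_left, hjq]
      · by_cases hi' : i = q
        · rw [hi', Equiv.swap_apply_right, hjq]
        · rw [Equiv.swap_apply_of_ne_of_ne hi hi']
    have hsq : s q = j := Equiv.swap_apply_right j q
    suffices h : ∃ σ : Equiv.Perm ι, (∀ i, L (σ i) = L i) ∧
        ∀ i, ∃ k : ℂ, k ≠ 0 ∧ E' (s i) = k • E (σ i) by
      obtain ⟨σ, hσ, hk⟩ := h
      refine ⟨s.symm.trans σ, fun i => ?_, fun i => ?_⟩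
      · rw [Equiv.trans_apply, hσ, ← hLs, Equiv.apply_symm_apply]
      · obtain ⟨k, hk0, hk⟩ := hk (s.symm i)
        exact ⟨k, hk0, by rw [← Equiv.apply_symm_apply s i, hk]; simp⟩
    have h3' : ∀ x, ∑ i, c i x • E i = ∑ i, c' (s i) x • E' (s i) := by
      intro x
      rw [h3 x, Equiv.sum_comp s fun i => c' i x • E' i]
    let U : Submodule ℂ V := LinearMap.ker (c q)
    have hU : Module.finrank ℂ U = n := by
      have := Module.Dual.finrank_ker_add_one_of_ne_zero hcq
      simp only [U]
      omega
    have hι : Fintype.card {i // i ≠ q} + 1 = Fintype.card ι := by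
      rw [Fintype.card_subtype_compl, Fintype.card_subtype_eq]
      omega
    obtain ⟨σ, hσ, hσE⟩ := ih (ι := {i // i ≠ q}) (V := U) hU (by omega) (fun i => L i)
      (fun i => hL i) (fun i => E i) (fun i => E' (s i))
      (fun i => (c i).comp U.subtype) (fun i => (c' (s i)).comp U.subtype)
      (fun i => hE i) (fun i => (hE' (s i)).trans_eq (hLs i))
      (by
        intro y T hT hTt
        have := h1 (fun i => if h : i ≠ q then y ⟨i, h⟩ else 0)
          (T.map (Function.Embedding.subtype _)) (by
            intro i hi
            obtain ⟨k, hk, rfl⟩ := Finset.mem_map.1 hi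
            have := k.2
            simpa [this] using hT k hk) (by rwa [Finset.card_map])
        have e : ∑ i, (if h : i ≠ q then y ⟨i, h⟩ else 0) • E i =
            ∑ i : {i // i ≠ q}, y i • E i := by
          rw [sum_subtype_ne q, dif_neg (by simp), zero_smul, zero_add]
          exact Finset.sum_congr rfl fun i _ => by rw [dif_pos i.2]
        rw [Finset.sum_map, e] at this
        exact this)
      (by
        intro x hx
        have hx' : (x : V) ≠ 0 := by simpa using hx
        have e1 := hC x hx'
        have e2 : ((zeroSet (fun i : {i // i ≠ q} => (c i).comp U.subtype) x).map
            (Function.Embedding.subtype _)) ⊆ (zeroSet c (x : V)).erase q := by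
          intro i hi
          obtain ⟨k, hk, rfl⟩ := Finset.mem_map.1 hi
          have hk' := mem_zeroSet.1 hk
          exact Finset.mem_erase.2 ⟨k.2, mem_zeroSet.2 hk'⟩
        have e3 := Finset.card_le_card e2
        rw [Finset.card_map, Finset.card_erase_of_mem (mem_zeroSet.2 x.2)] at e3
        have e4 : 0 < (zeroSet c (x : V)).card := Finset.card_pos.2 ⟨q, mem_zeroSet.2 x.2⟩
        omega)
      (by
        intro x
        have e1 := h3' x
        have e2 : c q x = 0 := x.2
        rw [sum_subtype_ne q, sum_subtype_ne q fun i => c' (s i) (x : V) • E' (s i), hsq, hcκ,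
          LinearMap.smul_apply, e2, smul_zero, zero_smul, zero_smul, zero_add, zero_add] at e1
        exact e1)
    choose k hk hkE using hσE
    -- the remaining term is a combination of the original ones containing `E q`
    obtain ⟨x, hx⟩ : ∃ x, c q x ≠ 0 := by
      by_contra hcon
      push Not at hcon
      exact hcq (LinearMap.ext hcon)
    let y : ι → ℂ := fun i =>
      if h : i ≠ q then c i x - c' (s (σ.symm ⟨i, h⟩)) x * k (σ.symm ⟨i, h⟩) else c q x
    have hy : ∑ i, y i • E i = (κ * c q x) • E' j := by
      have e1 := h3' x
      rw [sum_subtype_ne q, sum_subtype_ne q fun i => c' (s i) x • E' (s i), hsq, hcκ,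
        LinearMap.smul_apply, smul_eq_mul] at e1
      have e2 : ∑ i : {i // i ≠ q}, c' (s i) x • E' (s i) =
          ∑ i : {i // i ≠ q}, (c' (s (σ.symm i)) x * k (σ.symm i)) • E i := by
        rw [← Equiv.sum_comp σ.symm]
        refine Finset.sum_congr rfl fun i _ => ?_
        rw [hkE, Equiv.apply_symm_apply, smul_smul]
      rw [e2, ← sub_eq_iff_eq_add] at e1
      rw [← e1, sum_subtype_ne q, add_sub_assoc, ← Finset.sum_sub_distrib]
      congr 1
      · simp [y]
      · refine Finset.sum_congr rfl fun i _ => ?_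
        rw [← sub_smul]
        congr 1
        simp only [y]
        rw [dif_pos i.2]
    have hyq : y q = c q x := by simp [y]
    have hκx : κ * c q x ≠ 0 := mul_ne_zero hκ hx
    have hy0 : ∀ i, i ≠ q → y i = 0 := by
      intro i hi
      by_contra hne
      have e1 := h1 y {i, q} (by
        intro a ha
        rcases Finset.mem_insert.1 ha with rfl | ha
        · exact hne
        · rw [Finset.mem_singleton.1 ha, hyq]; exact hx)
        ((Finset.card_le_two).trans ht)
      rw [hy, LinearMap.range_smul _ _ hκx, Finset.sum_pair hi] at e1
      have := hE' j
      have := hL i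
      omega
    have hEj : E' j = κ⁻¹ • E q := by
      rw [Finset.sum_eq_single q (fun i _ hi => by rw [hy0 i hi, zero_smul]) (by simp), hyq,
        mul_comm, ← smul_smul] at hy
      have := smul_right_injective _ hx hy
      rw [this, smul_smul, inv_mul_cancel₀ hκ, one_smul]
    refine ⟨σ.extendDomain (Equiv.refl {i // i ≠ q}), fun i => ?_, fun i => ?_⟩
    · by_cases hi : i ≠ q
      · have := Equiv.Perm.extendDomain_apply_subtype σ (Equiv.refl {i // i ≠ q}) hi
        rw [this]
        exact hσ ⟨i, hi⟩
      · have := Equiv.Perm.extendDomain_apply_not_subtype (p := fun i => i ≠ q) σ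
          (Equiv.refl {i // i ≠ q}) (b := i) hi
        rw [this]
    · by_cases hi : i ≠ q
      · have := Equiv.Perm.extendDomain_apply_subtype σ (Equiv.refl {i // i ≠ q}) hi
        rw [this]
        exact ⟨k ⟨i, hi⟩, hk _, hkE ⟨i, hi⟩⟩
      · have := Equiv.Perm.extendDomain_apply_not_subtype (p := fun i => i ≠ q) σ
          (Equiv.refl {i // i ≠ q}) (b := i) hi
        rw [this, not_not.1 hi, hsq]
        exact ⟨κ⁻¹, inv_ne_zero hκ, hEj⟩

/-! ### Generic sections and the rank bound for block matrices -/

/-- Vectors dual to a linearly independent subfamily, for the bilinear pairing `⬝ᵥ`. -/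
theorem exists_dual_dotProduct {κ : Type*} [DecidableEq κ] {m : ℕ} {b : κ → Fin m → ℂ}
    {S : Set κ} (h : LinearIndepOn ℂ b S) :
    ∃ w : κ → Fin m → ℂ, ∀ p ∈ S, ∀ r ∈ S, b r ⬝ᵥ w p = if r = p then 1 else 0 := by
  obtain ⟨g, hg⟩ := LinearMap.exists_leftInverse_of_injective
    (Finsupp.linearCombination ℂ fun p : S => b p) (LinearMap.ker_eq_bot.2 h)
  classical
  refine ⟨fun p i => if hp : p ∈ S then g (Pi.single i 1) ⟨p, hp⟩ else 0, fun p hp r hr => ?_⟩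
  simp only [dif_pos hp]
  have e := LinearMap.congr_fun hg (Finsupp.single ⟨r, hr⟩ 1)
  rw [LinearMap.comp_apply, Finsupp.linearCombination_single, one_smul, LinearMap.id_apply,
    LinearMap.pi_apply_eq_sum_univ] at e
  have e' := DFunLike.congr_fun e ⟨p, hp⟩
  simp only [Finsupp.coe_finsetSum, Finset.sum_apply, Finsupp.smul_apply, smul_eq_mul,
    Finsupp.single_apply, Subtype.mk.injEq] at e'
  rw [← e', dotProduct]
  refine Finset.sum_congr rfl fun i _ => ?_
  congr 4
  funext j
  simp [Pi.single_apply, eq_comm]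

/-- A subspace of dimension `k ≤ n` that avoids, up to `0`, the common zeros of any `n` of the `c q`.
It is built one vector at a time; each vector has to avoid finitely many proper subspaces. -/
theorem exists_generic_subspace {m Q n : ℕ} (c : Fin Q → Fin m → ℂ) (hnQ : n ≤ Q)
    (h : ∀ N : Finset (Fin Q), N.card = n → LinearIndepOn ℂ c (N : Set (Fin Q))) (k : ℕ)
    (hk : k ≤ n) : ∃ V : Submodule ℂ (Fin m → ℂ), Module.finrank ℂ V = k ∧
      ∀ N : Finset (Fin Q), N.card = n → ∀ x ∈ V, (∀ q ∈ N, c q ⬝ᵥ x = 0) → x = 0 := by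
  induction k with
  | zero => exact ⟨⊥, by simp, fun N _ x hx _ => by simpa using hx⟩
  | succ k ih =>
    obtain ⟨V, hV, hVN⟩ := ih (by omega)
    let F : Finset (Fin Q) → (Fin m → ℂ) →ₗ[ℂ] (Fin Q → ℂ) := fun N =>
      LinearMap.pi fun q => if q ∈ N then dotProductBilin ℂ ℂ (c q) else 0
    have hF : ∀ N x q, F N x q = if q ∈ N then c q ⬝ᵥ x else 0 := by
      intro N x q
      by_cases hq : q ∈ N <;> simp [F, hq]
    have hFz : ∀ N x, F N x = 0 ↔ ∀ q ∈ N, c q ⬝ᵥ x = 0 := by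
      intro N x
      rw [funext_iff]
      refine forall_congr' fun q => ?_
      rw [hF]
      simp
    -- dual vectors to the `c q`, `q ∈ N`, show that `F N` has rank at least `n`
    have hFr : ∀ N : Finset (Fin Q), N.card = n → n ≤ Module.finrank ℂ (LinearMap.range (F N)) := by
      intro N hN
      obtain ⟨w, hw⟩ := exists_dual_dotProduct (h N hN)
      have hli : LinearIndependent ℂ (fun p : N => (⟨F N (w p), _, rfl⟩ : LinearMap.range (F N))) := by
        rw [Fintype.linearIndependent_iff]
        intro g hg p
        have e := congrFun (congrArg Subtype.val hg) p
        simp only [AddSubmonoidClass.coe_finsetSum, SetLike.val_smul, Finset.sum_apply,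
          Pi.smul_apply, hF, smul_eq_mul, ZeroMemClass.coe_zero, Pi.zero_apply] at e
        rw [Finset.sum_eq_single p] at e
        · simpa [hw p p.2 p p.2] using e
        · intro r _ hr
          simp [hw r r.2 p p.2, hr.symm]
        · simp
      simpa [hN] using hli.fintype_card_le_finrank
    have hex : ∃ v, ∀ N : Finset (Fin Q), N.card = n → F N v ∉ V.map (F N) := by
      by_contra hcon
      push Not at hcon
      obtain ⟨N, hN⟩ := Subspace.exists_eq_top_of_iUnion_eq_univ
        (p := fun N : {N : Finset (Fin Q) // N.card = n} => (V.map (F N)).comap (F N)) (by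
          refine Set.eq_univ_of_forall fun v => ?_
          obtain ⟨N, hN, hv⟩ := hcon v
          exact Set.mem_iUnion.2 ⟨⟨N, hN⟩, hv⟩)
      have h1 : LinearMap.range (F N) ≤ V.map (F N) := by
        rintro _ ⟨x, rfl⟩
        have : x ∈ (V.map (F N)).comap (F N) := hN ▸ Submodule.mem_top
        exact this
      have h2 := Submodule.finrank_mono h1
      have h3 := Submodule.finrank_map_le (F N) V
      have h4 := hFr N N.2
      omega
    obtain ⟨v, hv⟩ := hex
    have hvV : v ∉ V := by
      obtain ⟨N, -, hN⟩ := Finset.exists_subset_card_eq (s := (Finset.univ : Finset (Fin Q)))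
        (n := n) (by simpa using hnQ)
      exact fun hmem => hv N hN (Submodule.mem_map_of_mem hmem)
    refine ⟨V ⊔ Submodule.span ℂ {v}, ?_, ?_⟩
    · have h1 : V ⊓ Submodule.span ℂ {v} = ⊥ := by
        rw [← disjoint_iff, Submodule.disjoint_span_singleton' (by rintro rfl; exact hvV V.zero_mem)]
        exact hvV
      have h2 := Submodule.finrank_sup_add_finrank_inf_eq V (Submodule.span ℂ {v})
      rw [h1, finrank_bot, finrank_span_singleton (by rintro rfl; exact hvV V.zero_mem), hV] at h2
      simpa using h2
    · intro N hN x hx hxN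
      obtain ⟨u, hu, z, hz, rfl⟩ := Submodule.mem_sup.1 hx
      obtain ⟨a, rfl⟩ := Submodule.mem_span_singleton.1 hz
      by_cases ha : a = 0
      · subst ha
        rw [zero_smul, add_zero] at hxN ⊢
        exact hVN N hN u hu hxN
      · refine absurd ?_ (hv N hN)
        have e := (hFz N _).2 hxN
        rw [map_add, map_smul] at e
        refine ⟨-(a⁻¹ • u), V.neg_mem (V.smul_mem _ hu), ?_⟩
        rw [map_neg, map_smul, eq_neg_of_add_eq_zero_left e, smul_neg, neg_neg, smul_smul,
          inv_mul_cancel₀ ha, one_smul]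

theorem linearIndepOn_of_card_le_kRank {m Q : ℕ} (c : Fin Q → Fin m → ℂ) (s : Finset (Fin Q))
    (hs : s.card ≤ kRank (Matrix.of fun (i : Fin m) (q : Fin Q) => c q i)) :
    LinearIndepOn ℂ c (s : Set (Fin Q)) := by
  have hmem : kRank (Matrix.of fun (i : Fin m) (q : Fin Q) => c q i) ∈ _ :=
    Nat.sSup_mem ⟨0, Nat.zero_le _, fun s hs => by
      have : IsEmpty s := by rw [Finset.card_eq_zero.1 hs]; infer_instance
      exact linearIndependent_empty_type⟩ ⟨Q, fun k hk => hk.1⟩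
  obtain ⟨u, hsu, -, hu⟩ := Finset.exists_subsuperset_card_eq (Finset.subset_univ s) hs
    (by simpa using hmem.1)
  have := hmem.2 u hu
  exact LinearIndepOn.mono (t := (s : Set (Fin Q))) (s := (u : Set (Fin Q))) this
    (Finset.coe_subset.2 hsu)

theorem kRank_le {m Q : ℕ} (M : Matrix (Fin m) (Fin Q) ℂ) : kRank M ≤ Q :=
  csSup_le' fun _ hk => hk.1

theorem gkRank_le {m Q : ℕ} (L : Fin Q → ℕ) (A : ∀ q : Fin Q, Matrix (Fin m) (Fin (L q)) ℂ) :
    gkRank L A ≤ Q :=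
  csSup_le' fun _ hk => hk.1

theorem linearIndepOn_of_card_le_gkRank {m Q : ℕ} (L : Fin Q → ℕ)
    (A : ∀ q : Fin Q, Matrix (Fin m) (Fin (L q)) ℂ) (s : Finset (Fin Q))
    (hs : s.card ≤ gkRank L A) :
    LinearIndepOn ℂ (fun (p : Σ q, Fin (L q)) i => A p.1 i p.2) {p | p.1 ∈ s} := by
  have hmem : gkRank L A ∈ _ :=
    Nat.sSup_mem ⟨0, Nat.zero_le _, fun s hs => by
      have : IsEmpty {q // q ∈ s} := by rw [Finset.card_eq_zero.1 hs]; infer_instance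
      exact linearIndependent_empty_type⟩ ⟨Q, fun k hk => hk.1⟩
  obtain ⟨u, hsu, -, hu⟩ := Finset.exists_subsuperset_card_eq (Finset.subset_univ s) hs
    (by simpa using hmem.1)
  have := hmem.2 u hu
  refine LinearIndepOn.mono (s := {p | p.1 ∈ u}) ?_ fun p hp => hsu hp
  exact this.comp (fun p : {p : (Σ q, Fin (L q)) | p.1 ∈ u} => ⟨⟨p.1.1, p.2⟩, p.1.2⟩) (by
    rintro ⟨⟨q, l⟩, h⟩ ⟨⟨q', l'⟩, h'⟩ e
    simp only [Sigma.mk.injEq, Subtype.mk.injEq] at e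
    obtain ⟨rfl, e⟩ := e
    obtain rfl := eq_of_heq e
    rfl)

/-- The rank bound. The support of `y` is covered by `X ⊇ T` with at most `gkRank L A` elements
and `Y = T ∪ (supp y \ X)` with at most `gkRank L B` elements. Pairing `F = ∑ y q • A q * (B q)ᵀ`
with vectors dual to the columns of `A` over `X` and of `B` over `Y`, only the indices in `T`
contribute, and the resulting matrix is diagonal with nonzero entries. -/
theorem sum_le_finrank_range {m₁ m₂ Q : ℕ} (L : Fin Q → ℕ)
    (A : ∀ q : Fin Q, Matrix (Fin m₁) (Fin (L q)) ℂ)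
    (B : ∀ q : Fin Q, Matrix (Fin m₂) (Fin (L q)) ℂ)
    (y : Fin Q → ℂ) (T : Finset (Fin Q)) (hT : ∀ q ∈ T, y q ≠ 0)
    (hcard : T.card + Q ≤ gkRank L A + gkRank L B) :
    ∑ q ∈ T, L q ≤ Module.finrank ℂ
      (LinearMap.range (∑ q, y q • (A q * (B q)ᵀ).mulVecLin)) := by
  classical
  have hA := gkRank_le L A
  have hB := gkRank_le L B
  let S : Finset (Fin Q) := Finset.univ.filter fun q => y q ≠ 0
  have hTS : T ⊆ S := fun q hq => by simpa [S] using hT q hq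
  have hSQ : S.card ≤ Q := by simpa using Finset.card_le_univ S
  obtain ⟨X, hTX, hXS, hXA, hYB⟩ : ∃ X, T ⊆ X ∧ X ⊆ S ∧ X.card ≤ gkRank L A ∧
      (T ∪ (S \ X)).card ≤ gkRank L B := by
    by_cases hS : S.card ≤ gkRank L A
    · refine ⟨S, hTS, subset_rfl, hS, ?_⟩
      rw [Finset.sdiff_self, Finset.union_empty]
      omega
    · obtain ⟨X, h1, h2, h3⟩ := Finset.exists_subsuperset_card_eq (n := gkRank L A) hTS
        (by omega) (by omega)
      refine ⟨X, h1, h2, h3.le, (Finset.card_union_le _ _).trans ?_⟩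
      rw [Finset.card_sdiff_of_subset h2]
      omega
  obtain ⟨v, hv⟩ := exists_dual_dotProduct (linearIndepOn_of_card_le_gkRank L A X hXA)
  obtain ⟨w, hw⟩ := exists_dual_dotProduct (linearIndepOn_of_card_le_gkRank L B _ hYB)
  simp only [Set.mem_ofPred_eq] at hv hw
  set F := ∑ q, y q • (A q * (B q)ᵀ).mulVecLin with hFdef
  have hF : ∀ x u : _, F x ⬝ᵥ u = ∑ p : Σ q, Fin (L q),
      y p.1 * (((fun i => B p.1 i p.2) ⬝ᵥ x) * ((fun i => A p.1 i p.2) ⬝ᵥ u)) := by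
    intro x u
    rw [Fintype.sum_sigma, hFdef, LinearMap.sum_apply, sum_dotProduct]
    refine Finset.sum_congr rfl fun q _ => ?_
    refine Eq.trans ?_ (Finset.mul_sum Finset.univ
      (fun l => ((fun i => B q i l) ⬝ᵥ x) * ((fun i => A q i l) ⬝ᵥ u)) (y q))
    rw [LinearMap.smul_apply, smul_dotProduct, smul_eq_mul, mulVecLin_apply,
      ← mulVec_mulVec, dotProduct_comm, dotProduct_mulVec, dotProduct]
    congr 1
    refine Finset.sum_congr rfl fun l _ => ?_
    rw [mul_comm]
    congr 1
    rw [dotProduct_comm]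
    rfl
  have key : ∀ p r : Σ q, Fin (L q), p.1 ∈ T → r.1 ∈ T →
      F (w p) ⬝ᵥ v r = if p = r then y p.1 else 0 := by
    intro p r hp hr
    rw [hF, Finset.sum_eq_single r]
    · rw [hv r (hTX hr) r (hTX hr), hw p (Finset.mem_union_left _ hp) r (Finset.mem_union_left _ hr)]
      by_cases e : p = r
      · subst e; simp
      · simp [e, Ne.symm e]
    · intro b _ hbr
      by_cases hbX : b.1 ∈ X
      · rw [hv r (hTX hr) b hbX, if_neg hbr, mul_zero, mul_zero]
      · by_cases hbS : b.1 ∈ S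
        · rw [hw p (Finset.mem_union_left _ hp) b
            (Finset.mem_union_right _ (Finset.mem_sdiff.2 ⟨hbS, hbX⟩)), if_neg, zero_mul, mul_zero]
          rintro rfl
          exact hbX (hTX hp)
        · have : y b.1 = 0 := by simpa [S] using hbS
          rw [this, zero_mul]
    · simp
  have hli : LinearIndependent ℂ (fun p : (T.sigma fun q => (Finset.univ : Finset (Fin (L q)))) =>
      (⟨F (w p), _, rfl⟩ : LinearMap.range F)) := by
    rw [Fintype.linearIndependent_iff]
    intro g hg r
    have hr : r.1.1 ∈ T := (Finset.mem_sigma.1 r.2).1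
    have e := congrArg (fun z => z.1 ⬝ᵥ v r) hg
    simp only [AddSubmonoidClass.coe_finsetSum, SetLike.val_smul, sum_dotProduct,
      smul_dotProduct, smul_eq_mul, ZeroMemClass.coe_zero, zero_dotProduct] at e
    rw [Finset.sum_eq_single r] at e
    · rw [key r r hr hr, if_pos rfl] at e
      exact (mul_eq_zero.1 e).resolve_right (hT _ hr)
    · intro p _ hp
      rw [key p r (Finset.mem_sigma.1 p.2).1 hr, if_neg (fun h => hp (Subtype.ext h)), mul_zero]
    · simp
  have := hli.fintype_card_le_finrank
  rw [Fintype.card_coe, Finset.card_sigma] at this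
  simpa using this

/-! ### Recovering the factors -/

theorem exists_leftInverse_of_columns {m l : ℕ} {A : Matrix (Fin m) (Fin l) ℂ}
    (h : LinearIndependent ℂ (fun (j : Fin l) (i : Fin m) => A i j)) :
    ∃ P : Matrix (Fin l) (Fin m) ℂ, P * A = 1 := by
  obtain ⟨w, hw⟩ := exists_dual_dotProduct (linearIndepOn_univ_iff.2 h)
  refine ⟨Matrix.of w, ?_⟩
  ext p r
  rw [Matrix.mul_apply, Matrix.one_apply]
  have := hw p trivial r trivial
  simp only [dotProduct] at this
  simp only [Matrix.of_apply, mul_comm (w p _), this, eq_comm]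

/-- Two factorizations of the same matrix, up to a nonzero scalar, the first one through factors of
full column rank, differ by a change of basis of the inner space. With left inverses `P` of `A` and
`R` of `B`, the matrices are `M = P * A'` and `N = R * B'`. -/
theorem exists_factors {m₁ m₂ l : ℕ} {A A' : Matrix (Fin m₁) (Fin l) ℂ}
    {B B' : Matrix (Fin m₂) (Fin l) ℂ}
    (hA : LinearIndependent ℂ (fun (j : Fin l) (i : Fin m₁) => A i j))
    (hB : LinearIndependent ℂ (fun (j : Fin l) (i : Fin m₂) => B i j)) {k : ℂ} (hk : k ≠ 0)
    (h : A' * B'ᵀ = k • (A * Bᵀ)) :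
    ∃ M N : Matrix (Fin l) (Fin l) ℂ, IsUnit M ∧ IsUnit N ∧ k⁻¹ • (M * Nᵀ) = 1 ∧
      A' = A * M ∧ B' = B * N := by
  obtain ⟨P, hP⟩ := exists_leftInverse_of_columns hA
  obtain ⟨R, hR⟩ := exists_leftInverse_of_columns hB
  have hR' : Bᵀ * Rᵀ = 1 := by rw [← Matrix.transpose_mul, hR, Matrix.transpose_one]
  have e1 : P * A' * B'ᵀ = k • Bᵀ := by
    rw [Matrix.mul_assoc, h, Matrix.mul_smul, ← Matrix.mul_assoc, hP, Matrix.one_mul]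
  have e2 : A' * (B'ᵀ * Rᵀ) = k • A := by
    rw [← Matrix.mul_assoc, h, Matrix.smul_mul, Matrix.mul_assoc, hR', Matrix.mul_one]
  have e3 : k⁻¹ • (P * A' * (B'ᵀ * Rᵀ)) = 1 := by
    rw [Matrix.mul_assoc, e2, Matrix.mul_smul, hP, smul_smul, inv_mul_cancel₀ hk, one_smul]
  have e4 : P * A' * (k⁻¹ • (B'ᵀ * Rᵀ)) = 1 := by rw [Matrix.mul_smul, e3]
  have e5 : (k⁻¹ • (B'ᵀ * Rᵀ)) * (P * A') = 1 := mul_eq_one_comm.1 e4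
  have hN : (R * B')ᵀ = B'ᵀ * Rᵀ := Matrix.transpose_mul _ _
  refine ⟨P * A', R * B', IsUnit.of_mul_eq_one _ e4, ?_, by rw [hN, e3], ?_, ?_⟩
  · rw [← Matrix.isUnit_transpose, hN]
    rw [Matrix.smul_mul, ← Matrix.mul_smul] at e5
    exact IsUnit.of_mul_eq_one _ e5
  · calc A' = A' * ((k⁻¹ • (B'ᵀ * Rᵀ)) * (P * A')) := by rw [e5, Matrix.mul_one]
      _ = A * (P * A') := by
        rw [← Matrix.mul_assoc, Matrix.mul_smul, e2, smul_smul, inv_mul_cancel₀ hk, one_smul]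
  · apply Matrix.transpose_injective
    rw [Matrix.transpose_mul, hN]
    calc B'ᵀ = (k⁻¹ • (B'ᵀ * Rᵀ)) * (P * A') * B'ᵀ := by rw [e5, Matrix.one_mul]
      _ = B'ᵀ * Rᵀ * Bᵀ := by
        rw [Matrix.mul_assoc, e1, Matrix.smul_mul, Matrix.mul_smul, smul_smul,
          inv_mul_cancel₀ hk, one_smul]

theorem finrank_range_mulVecLin_le {m₁ m₂ l : ℕ} (A : Matrix (Fin m₁) (Fin l) ℂ)
    (B : Matrix (Fin m₂) (Fin l) ℂ) :
    Module.finrank ℂ (LinearMap.range (A * Bᵀ).mulVecLin) ≤ l :=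
  (Matrix.rank_mul_le_left A Bᵀ).trans (Matrix.rank_le_width A)

/-- Generalized Kruskal uniqueness theorem for the block term decomposition of a
third-order tensor into rank-`(L q, L q, 1)` terms. -/
theorem btd_uniqueness {I₁ I₂ I₃ Q : ℕ} (hQ : 1 ≤ Q)
    (L : Fin Q → ℕ) (hL : ∀ q, 1 ≤ L q)
    (A : ∀ q : Fin Q, Matrix (Fin I₁) (Fin (L q)) ℂ)
    (B : ∀ q : Fin Q, Matrix (Fin I₂) (Fin (L q)) ℂ)
    (c : Fin Q → Fin I₃ → ℂ)
    (hA : ∀ q, LinearIndependent ℂ (fun j : Fin (L q) => fun i : Fin I₁ => A q i j))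
    (hB : ∀ q, LinearIndependent ℂ (fun j : Fin (L q) => fun i : Fin I₂ => B q i j))
    (hI₁ : ∀ q, L q ≤ I₁) (hI₂ : ∀ q, L q ≤ I₂)
    (hdim : ∑ q : Fin Q, (L q) ^ 2 ≤ I₁ * I₂)
    (hKruskal : 2 * Q + 2 ≤
      gkRank L A + gkRank L B + kRank (Matrix.of fun (i : Fin I₃) (q : Fin Q) => c q i))
    (A' : ∀ q : Fin Q, Matrix (Fin I₁) (Fin (L q)) ℂ)
    (B' : ∀ q : Fin Q, Matrix (Fin I₂) (Fin (L q)) ℂ)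
    (c' : Fin Q → Fin I₃ → ℂ)
    (heq : ∀ (i : Fin I₁) (j : Fin I₂) (k : Fin I₃),
      ∑ q : Fin Q, (∑ l : Fin (L q), A' q i l * B' q j l) * c' q k
        = ∑ q : Fin Q, (∑ l : Fin (L q), A q i l * B q j l) * c q k) :
    ∃ (σ : Equiv.Perm (Fin Q)) (hσ : ∀ q, L (σ q) = L q)
      (M : ∀ q : Fin Q, Matrix (Fin (L q)) (Fin (L q)) ℂ)
      (N : ∀ q : Fin Q, Matrix (Fin (L q)) (Fin (L q)) ℂ)
      (lam : Fin Q → ℂ),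
      (∀ q, IsUnit (M q)) ∧ (∀ q, IsUnit (N q)) ∧ (∀ q, lam q ≠ 0) ∧
      (∀ q, lam q • (M q * (N q)ᵀ) = 1) ∧
      (∀ (q : Fin Q) (i : Fin I₁) (j : Fin (L q)),
        A' q i j = ∑ l : Fin (L q), A (σ q) i (Fin.cast (hσ q).symm l) * M q l j) ∧
      (∀ (q : Fin Q) (i : Fin I₂) (j : Fin (L q)),
        B' q i j = ∑ l : Fin (L q), B (σ q) i (Fin.cast (hσ q).symm l) * N q l j) ∧
      (∀ (q : Fin Q) (k : Fin I₃), c' q k = lam q * c (σ q) k) := by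
  have hkA := gkRank_le L A
  have hkB := gkRank_le L B
  have hkC := kRank_le (Matrix.of fun (i : Fin I₃) (q : Fin Q) => c q i)
  obtain ⟨n, hn⟩ : ∃ n, n + gkRank L A + gkRank L B = 2 * Q + 2 :=
    ⟨2 * Q + 2 - gkRank L A - gkRank L B, by omega⟩
  obtain ⟨t, ht⟩ : ∃ t, t + Q = gkRank L A + gkRank L B :=
    ⟨gkRank L A + gkRank L B - Q, by omega⟩
  let E : Fin Q → (Fin I₂ → ℂ) →ₗ[ℂ] (Fin I₁ → ℂ) := fun q => (A q * (B q)ᵀ).mulVecLin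
  let E' : Fin Q → (Fin I₂ → ℂ) →ₗ[ℂ] (Fin I₁ → ℂ) := fun q => (A' q * (B' q)ᵀ).mulVecLin
  have h1 : ∀ (y : Fin Q → ℂ) (T : Finset (Fin Q)), (∀ i ∈ T, y i ≠ 0) → T.card ≤ t →
      ∑ i ∈ T, L i ≤ Module.finrank ℂ (LinearMap.range (∑ i, y i • E i)) :=
    fun y T hT hTt => sum_le_finrank_range L A B y T hT (by omega)
  have hslice : ∀ k, ∑ q, c q k • E q = ∑ q, c' q k • E' q := by
    intro k
    have hm : ∑ q, c q k • (A q * (B q)ᵀ) = ∑ q, c' q k • (A' q * (B' q)ᵀ) := by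
      ext i j
      simp only [Matrix.sum_apply, Matrix.smul_apply, Matrix.mul_apply, Matrix.transpose_apply,
        smul_eq_mul]
      simpa only [mul_comm] using (heq i j k).symm
    have := congrArg Matrix.toLin' hm
    simpa only [map_sum, map_smul, Matrix.toLin'_apply'] using this
  -- a generic subspace of contractions of the third mode
  obtain ⟨V, hV, hVN⟩ := exists_generic_subspace c (n := n) (by omega)
    (fun N hN => linearIndepOn_of_card_le_kRank c N (by omega)) n le_rfl
  obtain ⟨σ, hσ, hE⟩ := exists_perm_of_tensor_eq (t := t) (by omega) n (by omega) hV
    (by rw [Fintype.card_fin]; omega) L hL E E'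
    (fun q => (dotProductBilin ℂ ℂ (c q)).comp V.subtype)
    (fun q => (dotProductBilin ℂ ℂ (c' q)).comp V.subtype)
    (fun q => finrank_range_mulVecLin_le _ _) (fun q => finrank_range_mulVecLin_le _ _) h1
    (by
      intro x hx
      by_contra hcon
      obtain ⟨N, hNz, hN⟩ := Finset.exists_subset_card_eq (not_lt.1 hcon)
      refine hx (Subtype.ext (hVN N hN x x.2 fun q hq => ?_))
      exact mem_zeroSet.1 (hNz hq))
    (by
      intro x
      have hx : ∀ (d : Fin Q → Fin I₃ → ℂ) (G : Fin Q → (Fin I₂ → ℂ) →ₗ[ℂ] (Fin I₁ → ℂ)),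
          ∑ q, (d q ⬝ᵥ (x : Fin I₃ → ℂ)) • G q = ∑ k, x.1 k • ∑ q, d q k • G q := by
        intro d G
        simp only [dotProduct, Finset.sum_smul, Finset.smul_sum, smul_smul]
        rw [Finset.sum_comm]
        simp only [mul_comm]
      refine (hx c E).trans (Eq.trans ?_ (hx c' E').symm)
      simp only [hslice])
  choose μ hμ hEμ using hE
  -- the original terms are linearly independent, which determines the third factors
  have hind : ∀ y : Fin Q → ℂ, ∑ q, y q • E q = 0 → ∀ q, y q = 0 := by
    intro y hy q
    by_contra hne
    have := h1 y {q} (by simpa using hne) (by rw [Finset.card_singleton]; omega)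
    rw [hy, LinearMap.range_zero, finrank_bot, Finset.sum_singleton] at this
    have := hL q
    omega
  have hc : ∀ q k, c' q k * μ q = c (σ q) k := by
    intro q k
    have e := hslice k
    have e' : ∑ q, c' q k • E' q = ∑ r, (c' (σ.symm r) k * μ (σ.symm r)) • E r := by
      rw [← Equiv.sum_comp σ.symm]
      refine Finset.sum_congr rfl fun r _ => ?_
      rw [hEμ, Equiv.apply_symm_apply, smul_smul]
    rw [e', eq_comm, ← sub_eq_zero, ← Finset.sum_sub_distrib] at e
    have := hind (fun r => c' (σ.symm r) k * μ (σ.symm r) - c r k)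
      (by rw [← e]; exact Finset.sum_congr rfl fun r _ => by module) (σ q)
    simpa only [Equiv.symm_apply_apply, sub_eq_zero] using this
  have hf : ∀ q, ∃ M N : Matrix (Fin (L q)) (Fin (L q)) ℂ, IsUnit M ∧ IsUnit N ∧
      (μ q)⁻¹ • (M * Nᵀ) = 1 ∧
      A' q = (A (σ q)).submatrix id (Fin.cast (hσ q).symm) * M ∧
      B' q = (B (σ q)).submatrix id (Fin.cast (hσ q).symm) * N := by
    intro q
    refine exists_factors (A := (A (σ q)).submatrix id (Fin.cast (hσ q).symm))
      (B := (B (σ q)).submatrix id (Fin.cast (hσ q).symm)) ((hA (σ q)).comp _ (Fin.cast_injective _))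
      ((hB (σ q)).comp _ (Fin.cast_injective _)) (hμ q) ?_
    have e : A' q * (B' q)ᵀ = μ q • (A (σ q) * (B (σ q))ᵀ) := by
      apply Matrix.toLin'.injective
      rw [map_smul, Matrix.toLin'_apply', Matrix.toLin'_apply']
      exact hEμ q
    rw [e, Matrix.transpose_submatrix]
    congr 1
    exact (Matrix.submatrix_mul_equiv (A (σ q)) (B (σ q))ᵀ id (finCongr (hσ q).symm) id).symm
  choose M N hM hN hMN hAM hBN using hf
  refine ⟨σ, hσ, M, N, fun q => (μ q)⁻¹, hM, hN, fun q => inv_ne_zero (hμ q), hMN, ?_, ?_, ?_⟩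
  · intro q i j
    conv_lhs => rw [hAM q]
    rfl
  · intro q i j
    conv_lhs => rw [hBN q]
    rfl
  · intro q k
    rw [← hc q k, mul_comm, mul_assoc, mul_inv_cancel₀ (hμ q), mul_one]
end

section
/- A random phase-only combining matrix is full column rank with probability one: Let N ≥ M ≥ 1. For a real phase matrix Φ ∈ ℝ^{N×M}, define W(Φ) ∈ ℂ^{N×M} entrywise by W(Φ)(n,m) = exp(i·Φ(n,m)). Then the set of Φ ∈ ℝ^{N×M} for which W(Φ) does not have full column rank M (i.e., the columns of W(Φ) are linearly dependent over ℂ) has Lebesgue measure zero in ℝ^{N·M}. -/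
/-!
The leading `k × k` minors of `W(Φ)` are nonzero for almost every `Φ`, by induction on `k ≤ M`.
Expanding the `(k+1)`-st minor along its last row shows that it depends on the corner phase
`Φ(k, k)` only through `a * exp(i Φ(k, k)) + b`, where `a` is the `k`-th minor
(`det_sub_det_of_eq_off_corner`). When `a ≠ 0`, two values of the corner phase at which this vanishes
differ by a multiple of `2π`, so there are only countably many of them; a measurable set whose
lines in one fixed coordinate direction are all countable is null
(`volume_eq_zero_of_countable_lines`). For `k = M`, a nonzero leading minor makes the columns
linearly independent.
-/

open MeasureTheory

/-- Fubini in one coordinate direction. -/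
lemma volume_eq_zero_of_countable_lines {ι : Type*} [Fintype ι] [DecidableEq ι]
    {S : Set (ι → ℝ)} (hS : MeasurableSet S) (i : ι)
    (h : ∀ x : ι → ℝ, {t : ℝ | Function.update x i t ∈ S}.Countable) : volume S = 0 := by
  have hf : Measurable (S.indicator (1 : (ι → ℝ) → ENNReal)) := measurable_one.indicator hS
  have inner (x : ι → ℝ) :
      ∫⁻ t : ℝ, S.indicator (1 : (ι → ℝ) → ENNReal) (Function.update x i t) = 0 := by
    have hm : MeasurableSet {t : ℝ | Function.update x i t ∈ S} := (h x).measurableSet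
    have : (fun t : ℝ => S.indicator (1 : (ι → ℝ) → ENNReal) (Function.update x i t))
        = {t : ℝ | Function.update x i t ∈ S}.indicator 1 := by
      ext t; simp [Set.indicator]
    rw [this, lintegral_indicator_one hm, (h x).measure_zero]
  rw [← lintegral_indicator_one hS, volume_pi,
    lintegral_eq_lmarginal_univ (μ := fun _ : ι => (volume : Measure ℝ)) (0 : ι → ℝ),
    lmarginal_erase' _ hf (Finset.mem_univ i)]
  simp only [inner]
  simp [lmarginal]

/-- The determinant is affine in the bottom-right entry, with slope the complementary minor. -/
lemma det_sub_det_of_eq_off_corner {k : ℕ} (A B : Matrix (Fin (k + 1)) (Fin (k + 1)) ℂ)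
    (h : ∀ i j, (i, j) ≠ (Fin.last k, Fin.last k) → A i j = B i j) :
    A.det - B.det = (A (Fin.last k) (Fin.last k) - B (Fin.last k) (Fin.last k)) *
      (A.submatrix Fin.castSucc Fin.castSucc).det := by
  have hsub (j : Fin (k + 1)) : A.submatrix (Fin.last k).succAbove j.succAbove
      = B.submatrix (Fin.last k).succAbove j.succAbove := by
    ext a b
    refine h _ _ fun e => ?_
    exact (Fin.succAbove_ne _ _) (congrArg Prod.fst e)
  have hrow (j : Fin k) : A (Fin.last k) j.castSucc = B (Fin.last k) j.castSucc :=
    h _ _ fun e => (Fin.castSucc_lt_last j).ne (congrArg Prod.snd e)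
  have hA : A.submatrix Fin.castSucc Fin.castSucc
      = B.submatrix (Fin.last k).succAbove (Fin.last k).succAbove := by
    rw [← hsub, Fin.succAbove_last]
  rw [Matrix.det_succ_row A (Fin.last k), Matrix.det_succ_row B (Fin.last k),
    Fin.sum_univ_castSucc, Fin.sum_univ_castSucc, hA]
  simp only [hsub, hrow, Fin.val_last, Even.neg_one_pow (Even.add_self k)]
  ring

/-- The leading `k × k` block of `W(Φ)`. -/
noncomputable def leadingBlock {N M k : ℕ} (hN : k ≤ N) (hM : k ≤ M) (Φ : Fin N × Fin M → ℝ) :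
    Matrix (Fin k) (Fin k) ℂ :=
  fun i j => Complex.exp (Complex.I * (Φ (Fin.castLE hN i, Fin.castLE hM j) : ℂ))

lemma measurable_det_leadingBlock {N M k : ℕ} (hN : k ≤ N) (hM : k ≤ M) :
    Measurable fun Φ : Fin N × Fin M → ℝ => (leadingBlock hN hM Φ).det := by
  refine Continuous.measurable (Continuous.matrix_det ?_)
  unfold leadingBlock
  fun_prop

lemma countable_setOf_exp_eq (s : ℝ) :
    {t : ℝ | Complex.exp (Complex.I * (t : ℂ)) = Complex.exp (Complex.I * (s : ℂ))}.Countable := by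
  refine (Set.countable_range fun n : ℤ => s + n * (2 * Real.pi)).mono fun t ht => ?_
  obtain ⟨n, hn⟩ := Complex.exp_eq_exp_iff_exists_int.1 ht
  refine ⟨n, ?_⟩
  have : (t : ℂ) = s + n * (2 * Real.pi) :=
    mul_left_cancel₀ Complex.I_ne_zero (by rw [hn]; ring)
  exact_mod_cast this.symm

lemma volume_det_leadingBlock_eq_zero {N M : ℕ} (k : ℕ) (hN : k ≤ N) (hM : k ≤ M) :
    volume {Φ : Fin N × Fin M → ℝ | (leadingBlock hN hM Φ).det = 0} = 0 := by
  induction k with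
  | zero => simp
  | succ k ih =>
    have hN' : k ≤ N := by omega
    have hM' : k ≤ M := by omega
    have hS : MeasurableSet {Φ : Fin N × Fin M → ℝ |
        (leadingBlock hN hM Φ).det = 0 ∧ (leadingBlock hN' hM' Φ).det ≠ 0} :=
      (measurable_det_leadingBlock hN hM (measurableSet_singleton 0)).inter
        (measurable_det_leadingBlock hN' hM' (measurableSet_singleton 0).compl)
    have hnull := volume_eq_zero_of_countable_lines hS
      (Fin.castLE hN (Fin.last k), Fin.castLE hM (Fin.last k)) ?_
    · refine measure_mono_null (fun Φ hΦ => ?_) (measure_union_null (ih hN' hM') hnull)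
      by_cases h0 : (leadingBlock hN' hM' Φ).det = 0
      · exact Or.inl h0
      · exact Or.inr ⟨hΦ, h0⟩
    · intro x
      rcases Set.eq_empty_or_nonempty {t : ℝ | Function.update x
        (Fin.castLE hN (Fin.last k), Fin.castLE hM (Fin.last k)) t ∈ {Φ : Fin N × Fin M → ℝ |
          (leadingBlock hN hM Φ).det = 0 ∧ (leadingBlock hN' hM' Φ).det ≠ 0}} with he | ⟨s, hs⟩
      · rw [he]; exact Set.countable_empty
      · refine (countable_setOf_exp_eq s).mono fun t ht => ?_
        have key := det_sub_det_of_eq_off_corner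
          (leadingBlock hN hM (Function.update x
            (Fin.castLE hN (Fin.last k), Fin.castLE hM (Fin.last k)) t))
          (leadingBlock hN hM (Function.update x
            (Fin.castLE hN (Fin.last k), Fin.castLE hM (Fin.last k)) s)) ?_
        · rw [ht.1, hs.1, sub_zero] at key
          -- the complementary minor is definitionally the determinant of the smaller block
          have hz := (mul_eq_zero.1 key.symm).resolve_right ht.2
          simpa [leadingBlock, sub_eq_zero] using hz
        · intro i j hij
          have hne : (Fin.castLE hN i, Fin.castLE hM j) ≠
              (Fin.castLE hN (Fin.last k), Fin.castLE hM (Fin.last k)) := by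
            intro e
            apply hij
            simpa [Prod.ext_iff] using e
          simp only [leadingBlock, Function.update_of_ne hne]

/-- A random phase-only combining matrix is full column rank with probability one:
the set of real phase matrices `Φ` for which the columns of
`W(Φ) (n, m) = exp(i Φ(n, m))` are linearly dependent over `ℂ` has Lebesgue
measure zero. -/
theorem random_phase_matrix_full_column_rank_ae {N M : ℕ} (hM : 1 ≤ M) (hNM : M ≤ N) :
    volume {Φ : Fin N × Fin M → ℝ |
      ¬ LinearIndependent ℂ
        (fun m : Fin M => fun n : Fin N => Complex.exp (Complex.I * (Φ (n, m) : ℂ)))} = 0 := by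
  refine measure_mono_null (fun Φ hΦ => ?_) (volume_det_leadingBlock_eq_zero M hNM le_rfl)
  by_contra hdet
  refine hΦ ?_
  -- restricting to the first `M` rows gives the columns of the leading `M × M` block
  exact LinearIndependent.of_comp (LinearMap.funLeft ℂ ℂ (Fin.castLE hNM))
    (Matrix.linearIndependent_cols_of_det_ne_zero hdet)
end

section
/- Random phase-only projection preserves full column rank almost surely: Let K ≤ M ≤ N and let B ∈ ℂ^{N×K} be a fixed matrix with full column rank K. For a real phase matrix Φ ∈ ℝ^{N×M}, define W(Φ) ∈ ℂ^{N×M} entrywise by W(Φ)(n,m) = exp(i·Φ(n,m)). Then for Lebesgue-almost every Φ ∈ ℝ^{N×M}, the projected matrix W(Φ)ᴴ·B ∈ ℂ^{M×K} has full column rank K; equivalently, its k-rank equals K = min(M,K). -/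
/-!
The top `K × K` minor of `W(Φ)ᴴ * B` is a polynomial in the unimodular numbers `exp (-i Φ(n,m))`.
This polynomial is not identically zero: replacing the numbers by the entries of a left inverse
of `B` turns the minor into `det 1 = 1`.  A nonzero complex polynomial vanishes at
`(exp (-i φ_j))_j` only for a Lebesgue-null set of real `φ`
(`volume_eval_exp_eq_zero`), by induction on the number of variables: for almost every value of
the other variables some coefficient with respect to the first variable survives, which leaves a
one-variable polynomial with finitely many roots, each attained by at most countably many phases.
Off this null set the minor is invertible, so the `K` columns are independent.
-/

open MeasureTheory Matrix

/-- `φ ↦ exp (-i φ)` has countable fibres, so it avoids the finitely many roots of a nonzero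
polynomial almost everywhere. -/
lemma volume_eval_exp_eq_zero_one (q : Polynomial ℂ) (hq : q ≠ 0) :
    volume {x : ℝ | q.eval (Complex.exp (-(Complex.I * (x : ℂ)))) = 0} = 0 := by
  refine Set.Countable.measure_zero ?_ _
  have hsub : {x : ℝ | q.eval (Complex.exp (-(Complex.I * (x : ℂ)))) = 0} ⊆
      ⋃ r ∈ q.roots.toFinset, {x : ℝ | Complex.exp (-(Complex.I * (x : ℂ))) = r} := by
    intro x hx
    simp only [Set.mem_iUnion, Set.mem_ofPred_eq]
    exact ⟨_, by simpa [hq] using hx, rfl⟩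
  refine Set.Countable.mono hsub (Set.Countable.biUnion (Finset.countable_toSet _) ?_)
  intro r _
  by_cases hne : ∃ x₀ : ℝ, Complex.exp (-(Complex.I * (x₀ : ℂ))) = r
  · obtain ⟨x₀, rfl⟩ := hne
    refine Set.Countable.mono ?_ (Set.countable_range fun k : ℤ => x₀ - k * (2 * Real.pi))
    intro x hx
    obtain ⟨k, hk⟩ := Complex.exp_eq_exp_iff_exists_int.mp hx
    refine ⟨k, ?_⟩
    have h2 : Complex.I * ((x₀ : ℂ) - k * (2 * Real.pi)) = Complex.I * x := by
      linear_combination hk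
    have h3 := mul_left_cancel₀ Complex.I_ne_zero h2
    exact_mod_cast h3
  · convert Set.countable_empty
    ext x
    simp only [Set.mem_ofPred_eq, Set.mem_empty_iff_false, iff_false]
    exact fun h => hne ⟨x, h⟩

lemma isClosed_eval_exp_eq_zero {σ : Type*} (p : MvPolynomial σ ℂ) :
    IsClosed {φ : σ → ℝ |
      MvPolynomial.eval (fun j => Complex.exp (-(Complex.I * (φ j : ℂ)))) p = 0} := by
  refine isClosed_eq ?_ continuous_const
  exact (MvPolynomial.continuous_eval p).comp (by fun_prop)

lemma volume_eval_exp_eq_zero_fin (n : ℕ) (p : MvPolynomial (Fin n) ℂ) (hp : p ≠ 0) :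
    volume {φ : Fin n → ℝ |
      MvPolynomial.eval (fun j => Complex.exp (-(Complex.I * (φ j : ℂ)))) p = 0} = 0 := by
  induction n with
  | zero =>
    convert measure_empty (μ := volume)
    ext φ
    simp only [Set.mem_ofPred_eq, Set.mem_empty_iff_false, iff_false]
    rw [MvPolynomial.eq_C_of_isEmpty p] at hp ⊢
    simpa using hp
  | succ n ih =>
    set S := {φ : Fin (n + 1) → ℝ |
      MvPolynomial.eval (fun j => Complex.exp (-(Complex.I * (φ j : ℂ)))) p = 0} with hS
    have hSm : MeasurableSet S := (isClosed_eval_exp_eq_zero p).measurableSet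
    have hpres := (volume_preserving_piFinSuccAbove (fun _ : Fin (n + 1) => ℝ) 0).symm
    have hpres2 := hpres.comp
      (Measure.measurePreserving_swap (μ := (volume : Measure (Fin n → ℝ)))
        (ν := (volume : Measure ℝ)))
    rw [← hpres2.measure_preimage hSm.nullMeasurableSet,
      Measure.measure_prod_null (hpres2.measurable hSm)]
    have hp' : MvPolynomial.finSuccEquiv ℂ n p ≠ 0 := by simpa using hp
    -- a coefficient, in the first variable, that is a nonzero polynomial in the others
    obtain ⟨d, hd⟩ : ∃ d, (MvPolynomial.finSuccEquiv ℂ n p).coeff d ≠ 0 := by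
      by_contra! h
      exact hp' (Polynomial.ext (by simpa using h))
    have hae := ih _ hd
    rw [← compl_compl {φ : Fin n → ℝ | _}] at hae
    filter_upwards [mem_ae_iff.mpr hae] with y hy
    refine measure_mono_null ?_ (volume_eval_exp_eq_zero_one
      ((MvPolynomial.finSuccEquiv ℂ n p).map
        (MvPolynomial.eval fun j => Complex.exp (-(Complex.I * (y j : ℂ))))) ?_)
    · intro x hx
      have hx' : MvPolynomial.eval (fun j => Complex.exp (-(Complex.I *
          ((Fin.cons x y : Fin (n + 1) → ℝ) j : ℂ)))) p = 0 := by
        simpa [S, MeasurableEquiv.piFinSuccAbove_symm_apply] using hx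
      rw [Set.mem_ofPred_eq, ← hx', ← MvPolynomial.eval_eq_eval_mv_eval']
      congr 2
      funext j
      refine Fin.cases ?_ (fun i => ?_) j <;> simp
    · intro h0
      apply hy
      have := congrArg (fun q => Polynomial.coeff q d) h0
      simpa using this

/-- A nonzero polynomial is almost everywhere nonzero on the torus, in phase coordinates. -/
lemma volume_eval_exp_eq_zero {σ : Type*} [Fintype σ] (p : MvPolynomial σ ℂ) (hp : p ≠ 0) :
    volume {φ : σ → ℝ |
      MvPolynomial.eval (fun j => Complex.exp (-(Complex.I * (φ j : ℂ)))) p = 0} = 0 := by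
  let e := Fintype.equivFin σ
  have hp' : MvPolynomial.rename e p ≠ 0 := fun h =>
    hp (MvPolynomial.rename_injective e e.injective (by simpa using h))
  have h := volume_eval_exp_eq_zero_fin _ _ hp'
  have hpres := volume_measurePreserving_piCongrLeft (fun _ : σ => ℝ) e.symm
  rw [← hpres.measure_preimage (isClosed_eval_exp_eq_zero p).measurableSet.nullMeasurableSet]
  refine measure_mono_null ?_ h
  intro φ hφ
  simp only [Set.mem_preimage, Set.mem_ofPred_eq] at hφ ⊢
  rw [MvPolynomial.eval_rename, ← hφ]
  congr 2
  funext j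
  have := Equiv.piCongrLeft_apply_apply (fun _ : σ => ℝ) e.symm φ (e j)
  simp only [Equiv.symm_apply_apply] at this
  simp [MeasurableEquiv.coe_piCongrLeft, this]

/-- The top `K × K` minor of `Zᵀ * B`, as a polynomial in the entries of the
`N × M` matrix `Z`. -/
noncomputable def minorPoly {N M K : ℕ} (hK : K ≤ M) (B : Matrix (Fin N) (Fin K) ℂ) :
    MvPolynomial (Fin N × Fin M) ℂ :=
  Matrix.det (Matrix.of fun m k : Fin K =>
    ∑ n : Fin N, MvPolynomial.X (n, Fin.castLE hK m) * MvPolynomial.C (B n k))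

lemma eval_minorPoly {N M K : ℕ} (hK : K ≤ M) (B : Matrix (Fin N) (Fin K) ℂ)
    (z : Fin N × Fin M → ℂ) :
    MvPolynomial.eval z (minorPoly hK B) =
      Matrix.det (Matrix.of fun m k : Fin K => ∑ n : Fin N, z (n, Fin.castLE hK m) * B n k) := by
  rw [minorPoly, RingHom.map_det]
  congr 1
  ext m k
  simp

lemma minorPoly_ne_zero {N M K : ℕ} (hK : K ≤ M) (B : Matrix (Fin N) (Fin K) ℂ)
    (hB : LinearIndependent ℂ (fun k : Fin K => fun n : Fin N => B n k)) :
    minorPoly hK B ≠ 0 := by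
  have hinj : Function.Injective B.mulVec := Matrix.mulVec_injective_iff.mpr hB
  obtain ⟨g, hg⟩ := LinearMap.exists_leftInverse_of_injective (Matrix.toLin' B)
    (LinearMap.ker_eq_bot.mpr (fun a b h => hinj (by simpa [Matrix.toLin'_apply] using h)))
  have hL : LinearMap.toMatrix' g * B = 1 := by
    have := congrArg LinearMap.toMatrix' hg
    rwa [LinearMap.toMatrix'_comp, LinearMap.toMatrix'_toLin', LinearMap.toMatrix'_id] at this
  intro h0
  -- the rows of `Zᵀ` beyond the first `K` do not enter the minor; they are set to zero
  have h1 := eval_minorPoly hK B (fun q => if h : (q.2 : ℕ) < K then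
    LinearMap.toMatrix' g ⟨q.2, h⟩ q.1 else 0)
  have h2 : (Matrix.of fun m k : Fin K => ∑ n : Fin N,
      (if h : ((Fin.castLE hK m : Fin M) : ℕ) < K then
        LinearMap.toMatrix' g ⟨(Fin.castLE hK m : Fin M), h⟩ n else 0) * B n k) = 1 := by
    rw [← hL]
    ext m k
    simp [Matrix.mul_apply]
  rw [h0] at h1
  simp only [] at h1
  rw [h2] at h1
  simp at h1

/-- Random phase-only projection preserves full column rank almost surely: if
`B ∈ ℂ^{N×K}` has full column rank `K ≤ M ≤ N`, then for Lebesgue-almost every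
real phase matrix `Φ`, the matrix `W(Φ)ᴴ ⬝ B` (with `W(Φ)(n,m) = exp(i Φ(n,m))`)
has full column rank `K`. -/
theorem random_phase_projection_full_column_rank_ae {N M K : ℕ}
    (hK : K ≤ M) (hMN : M ≤ N)
    (B : Matrix (Fin N) (Fin K) ℂ)
    (hB : LinearIndependent ℂ (fun k : Fin K => fun n : Fin N => B n k)) :
    volume {Φ : Fin N × Fin M → ℝ |
      ¬ LinearIndependent ℂ (fun k : Fin K => fun m : Fin M =>
        (((Matrix.of fun (n : Fin N) (m' : Fin M) =>
            Complex.exp (Complex.I * (Φ (n, m') : ℂ)))ᴴ) * B) m k)} = 0 := by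
  refine measure_mono_null ?_ (volume_eval_exp_eq_zero _ (minorPoly_ne_zero hK B hB))
  intro Φ hΦ
  by_contra hne
  apply hΦ
  rw [Set.mem_ofPred_eq, eval_minorPoly] at hne
  have hcols := Matrix.linearIndependent_cols_of_det_ne_zero hne
  refine LinearIndependent.of_comp (LinearMap.funLeft ℂ ℂ (Fin.castLE hK)) ?_
  suffices h : (LinearMap.funLeft ℂ ℂ (Fin.castLE hK)) ∘ (fun k : Fin K => fun m : Fin M =>
      (((Matrix.of fun (n : Fin N) (m' : Fin M) =>
        Complex.exp (Complex.I * (Φ (n, m') : ℂ)))ᴴ) * B) m k) =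
      (Matrix.of fun m k : Fin K => ∑ n : Fin N,
        Complex.exp (-(Complex.I * (Φ (n, Fin.castLE hK m) : ℂ))) * B n k).col by
    rw [h]
    exact hcols
  ext k m
  simp [Matrix.mul_apply, LinearMap.funLeft_apply, Matrix.col, ← Complex.exp_conj]
end
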